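/- arXiv:1211.2676 — 3 statements merged into one kernel-verified Lean document; each statement's English description precedes it below -/
import Mathlib

section
/- Fix smooth functions h, c, p, s of one variable. For every pair of smooth functions f, g of one variable, the local functionals H_f = ∫D_{(c,p,s)}(f)dx and H_g = ∫D_{(c,p,s)}(g)dx satisfy E((δH_f/δu)·(d/dx)(δH_g/δu)) = O(ε⁶), i.e. the coefficients of ε⁰, ε² and ε⁴ in E(E(D_{(c,p,s)}(f)) · (d/dx)E(D_{(c,p,s)}(g))) vanish identically as differential polynomials in u, u_x, u_xx, …. In particular, every H_f is an approximate conserved quantity, up to order ε⁶, of the PDE (eveq). -/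
open Set

noncomputable section

/-- Partial derivative of a jet density with respect to the k-th jet variable `u^(k)`. -/
def pderivJet (P : (ℕ → ℝ) → ℝ) (k : ℕ) (v : ℕ → ℝ) : ℝ :=
  deriv (fun y => P (Function.update v k y)) (v k)

/-- Total x-derivative of a jet density (no explicit x,t dependence). -/
def totalDer (P : (ℕ → ℝ) → ℝ) : (ℕ → ℝ) → ℝ :=
  fun v => ∑' k : ℕ, v (k + 1) * pderivJet P k v

/-- Euler-Lagrange operator `E(P) = Σ (-1)^k (d/dx)^k ∂P/∂u^(k)`. -/
def EulerOp (P : (ℕ → ℝ) → ℝ) : (ℕ → ℝ) → ℝ :=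
  fun v => ∑' k : ℕ, (-1 : ℝ) ^ k * (totalDer^[k] (pderivJet P k)) v

/-- Total x-derivative for densities with explicit x,t dependence. -/
def totalDerXT (P : ℝ → ℝ → (ℕ → ℝ) → ℝ) : ℝ → ℝ → (ℕ → ℝ) → ℝ :=
  fun x t v => deriv (fun y => P y t v) x + ∑' k : ℕ, v (k + 1) * pderivJet (P x t) k v

/-- Euler-Lagrange operator for densities with explicit x,t dependence. -/
def EulerOpXT (P : ℝ → ℝ → (ℕ → ℝ) → ℝ) : ℝ → ℝ → (ℕ → ℝ) → ℝ :=
  fun x t v => ∑' k : ℕ, (-1 : ℝ) ^ k *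
    (totalDerXT^[k] (fun x' t' w => pderivJet (P x' t') k w)) x t v

/-- The jet of a function of one variable at a point. -/
def jetsAt (w : ℝ → ℝ) (x : ℝ) : ℕ → ℝ := fun k => iteratedDeriv k w x

def cCoef (c h : ℝ → ℝ) (u : ℝ) : ℝ := c u * iteratedDeriv 3 h u

def pCoef (c p h : ℝ → ℝ) (u : ℝ) : ℝ :=
  p u * iteratedDeriv 3 h u + (3/10) * (c u)^2 * iteratedDeriv 4 h u

def sCoef (c p s h : ℝ → ℝ) (u : ℝ) : ℝ :=
  s u * iteratedDeriv 3 h u - (1/8) * c u * iteratedDeriv 2 c u * iteratedDeriv 4 h u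
    - (1/8) * c u * deriv c u * iteratedDeriv 5 h u - (1/24) * (c u)^2 * iteratedDeriv 6 h u
    - (1/6) * deriv p u * iteratedDeriv 4 h u - (1/6) * p u * iteratedDeriv 5 h u

/-- Dubrovin's D-operator. -/
def Dop (c p s h : ℝ → ℝ) (ε : ℝ) (v : ℕ → ℝ) : ℝ :=
  h (v 0) - ε^2/2 * cCoef c h (v 0) * (v 1)^2
    + ε^4 * (pCoef c p h (v 0) * (v 2)^2 + sCoef c p s h (v 0) * (v 1)^4)

/-- Conservation defect of a t-dependent family of densities along (eveq). -/
def consDefect (c p s h : ℝ → ℝ) (S : ℝ → ℝ → ℝ → (ℕ → ℝ) → ℝ) (ε x t : ℝ) (v : ℕ → ℝ) : ℝ :=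
  deriv (fun τ => EulerOpXT (S ε) x τ v) t
    + EulerOpXT (fun x' t' w => EulerOpXT (S ε) x' t' w * totalDer (EulerOp (Dop c p s h ε)) w) x t v

/-- Conservation up to order `O(ε^K)` along (eveq). -/
def ConservedUpTo (c p s h : ℝ → ℝ) (S : ℝ → ℝ → ℝ → (ℕ → ℝ) → ℝ) (K : ℕ) : Prop :=
  ∀ x t : ℝ, ∀ v : ℕ → ℝ, ∀ j < K, iteratedDeriv j (fun ε => consDefect c p s h S ε x t v) 0 = 0

open scoped ContDiff

/-- The algebra of differential polynomials: polynomials in the jet variables and in smooth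
functions of `u`. -/
def diffPoly : Subalgebra ℝ ((ℕ → ℝ) → ℝ) :=
  Algebra.adjoin ℝ
    (range (fun (k : ℕ) (v : ℕ → ℝ) => v k) ∪
      {P | ∃ φ : ℝ → ℝ, ContDiff ℝ ∞ φ ∧ P = fun v => φ (v 0)})

namespace diffPoly

theorem coord_mem (k : ℕ) : (fun v : ℕ → ℝ => v k) ∈ diffPoly :=
  Algebra.subset_adjoin (Or.inl ⟨k, rfl⟩)

theorem comp_mem {φ : ℝ → ℝ} (hφ : ContDiff ℝ ∞ φ) : (fun v : ℕ → ℝ => φ (v 0)) ∈ diffPoly :=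
  Algebra.subset_adjoin (Or.inr ⟨φ, hφ, rfl⟩)

theorem pderivJet_coord (j k : ℕ) :
    pderivJet (fun v => v j) k = fun _ => if j = k then 1 else 0 := by
  funext v
  by_cases hjk : j = k
  · subst hjk; simp [pderivJet]
  · simp [pderivJet, hjk]

theorem pderivJet_comp (φ : ℝ → ℝ) (k : ℕ) :
    pderivJet (fun v => φ (v 0)) k = fun v => if k = 0 then deriv φ (v 0) else 0 := by
  funext v
  by_cases hk : k = 0
  · subst hk; simp [pderivJet]
  · simp [pderivJet, hk, Ne.symm hk]

theorem pderivJet_const (r : ℝ) (k : ℕ) : pderivJet (fun _ => r) k = 0 := by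
  funext v
  simp [pderivJet]

theorem differentiable_update {P : (ℕ → ℝ) → ℝ} (hP : P ∈ diffPoly) (k : ℕ) (v : ℕ → ℝ) :
    Differentiable ℝ fun y => P (Function.update v k y) := by
  induction hP using Algebra.adjoin_induction with
  | mem P hP =>
    rcases hP with ⟨j, rfl⟩ | ⟨φ, hφ, rfl⟩
    · by_cases hjk : j = k
      · subst hjk; simp
      · simp [hjk]
    · by_cases hk : 0 = k
      · subst hk; simpa using hφ.differentiable (by simp)
      · simp [hk]
  | algebraMap r => exact differentiable_const r
  | add P Q _ _ hP hQ => exact hP.add hQ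
  | mul P Q _ _ hP hQ => exact hP.mul hQ

theorem pderivJet_add {P Q : (ℕ → ℝ) → ℝ} (hP : P ∈ diffPoly) (hQ : Q ∈ diffPoly) (k : ℕ) :
    pderivJet (P + Q) k = pderivJet P k + pderivJet Q k := by
  funext v
  exact deriv_add (differentiable_update hP k v _) (differentiable_update hQ k v _)

theorem pderivJet_mul {P Q : (ℕ → ℝ) → ℝ} (hP : P ∈ diffPoly) (hQ : Q ∈ diffPoly) (k : ℕ) :
    pderivJet (P * Q) k = P * pderivJet Q k + Q * pderivJet P k := by
  funext v
  have := deriv_mul (differentiable_update hP k v (v k)) (differentiable_update hQ k v (v k))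
  simp only [Function.update_eq_self] at this
  simp only [Pi.add_apply, Pi.mul_apply]
  refine this.trans ?_
  simp only [pderivJet]
  ring

theorem pderivJet_smul (r : ℝ) (P : (ℕ → ℝ) → ℝ) (k : ℕ) :
    pderivJet (r • P) k = r • pderivJet P k := by
  funext v
  exact deriv_const_mul_field r

theorem pderivJet_mem {P : (ℕ → ℝ) → ℝ} (hP : P ∈ diffPoly) (k : ℕ) :
    pderivJet P k ∈ diffPoly := by
  induction hP using Algebra.adjoin_induction with
  | mem P hP =>
    rcases hP with ⟨j, rfl⟩ | ⟨φ, hφ, rfl⟩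
    · rw [pderivJet_coord]
      exact diffPoly.algebraMap_mem _
    · rw [pderivJet_comp]
      by_cases hk : k = 0
      · simpa [hk] using comp_mem (contDiff_infty_iff_deriv.1 hφ).2
      · simp only [hk, if_false]
        exact diffPoly.zero_mem
  | algebraMap r =>
    have := pderivJet_const r k
    exact this ▸ diffPoly.zero_mem
  | add P Q hP hQ hP' hQ' =>
    rw [pderivJet_add hP hQ]
    exact diffPoly.add_mem hP' hQ'
  | mul P Q hP hQ hP' hQ' =>
    rw [pderivJet_mul hP hQ]
    exact diffPoly.add_mem (diffPoly.mul_mem hP hQ') (diffPoly.mul_mem hQ hP')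

theorem exists_pderivJet_eq_zero {P : (ℕ → ℝ) → ℝ} (hP : P ∈ diffPoly) :
    ∃ N, ∀ k ≥ N, pderivJet P k = 0 := by
  induction hP using Algebra.adjoin_induction with
  | mem P hP =>
    rcases hP with ⟨j, rfl⟩ | ⟨φ, hφ, rfl⟩
    · refine ⟨j + 1, fun k hk => ?_⟩
      rw [pderivJet_coord, if_neg (by omega)]
      rfl
    · refine ⟨1, fun k hk => ?_⟩
      simp only [pderivJet_comp, if_neg (show k ≠ 0 by omega)]
      rfl
  | algebraMap r => exact ⟨0, fun k _ => pderivJet_const r k⟩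
  | add P Q hP hQ hP' hQ' =>
    obtain ⟨M, hM⟩ := hP'
    obtain ⟨N, hN⟩ := hQ'
    refine ⟨max M N, fun k hk => ?_⟩
    rw [pderivJet_add hP hQ, hM k (le_of_max_le_left hk), hN k (le_of_max_le_right hk), add_zero]
  | mul P Q hP hQ hP' hQ' =>
    obtain ⟨M, hM⟩ := hP'
    obtain ⟨N, hN⟩ := hQ'
    refine ⟨max M N, fun k hk => ?_⟩
    rw [pderivJet_mul hP hQ, hM k (le_of_max_le_left hk), hN k (le_of_max_le_right hk)]
    simp

theorem totalDer_eq_sum {P : (ℕ → ℝ) → ℝ} {N : ℕ} (hN : ∀ k ≥ N, pderivJet P k = 0) :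
    totalDer P = ∑ k ∈ Finset.range N, (fun v => v (k + 1)) * pderivJet P k := by
  funext v
  rw [totalDer, tsum_eq_sum (s := Finset.range N)]
  · simp
  · intro k hk
    rw [hN k (by simpa using hk)]
    simp

theorem totalDer_mem {P : (ℕ → ℝ) → ℝ} (hP : P ∈ diffPoly) : totalDer P ∈ diffPoly := by
  obtain ⟨N, hN⟩ := exists_pderivJet_eq_zero hP
  rw [totalDer_eq_sum hN]
  exact diffPoly.sum_mem fun k _ => diffPoly.mul_mem (coord_mem _) (pderivJet_mem hP k)

/-- The partial derivative with respect to `u^(k)`, as a derivation of differential polynomials. -/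
def jetPartial (k : ℕ) : Derivation ℝ diffPoly diffPoly :=
  Derivation.mk'
    { toFun := fun P => ⟨pderivJet P k, pderivJet_mem P.2 k⟩
      map_add' := fun P Q => Subtype.ext (pderivJet_add P.2 Q.2 k)
      map_smul' := fun r P => Subtype.ext (pderivJet_smul r P k) }
    fun P Q => Subtype.ext (pderivJet_mul P.2 Q.2 k)

theorem coe_jetPartial (k : ℕ) (P : diffPoly) :
    (jetPartial k P : (ℕ → ℝ) → ℝ) = pderivJet P k := rfl

theorem exists_jetPartial_eq_zero (P : diffPoly) : ∃ N, ∀ k ≥ N, jetPartial k P = 0 := by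
  obtain ⟨N, hN⟩ := exists_pderivJet_eq_zero P.2
  exact ⟨N, fun k hk => Subtype.ext (hN k hk)⟩

theorem hasSum_totalDer (P : diffPoly) (v : ℕ → ℝ) :
    HasSum (fun k => v (k + 1) * pderivJet P k v) (totalDer P v) := by
  obtain ⟨N, hN⟩ := exists_pderivJet_eq_zero P.2
  refine (summable_of_ne_finset_zero (s := Finset.range N) fun k hk => ?_).hasSum
  rw [hN k (by simpa using hk)]
  simp

theorem totalDer_add (P Q : diffPoly) :
    totalDer ((P + Q : diffPoly) : (ℕ → ℝ) → ℝ) = totalDer P + totalDer Q := by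
  funext v
  refine (tsum_congr fun k => ?_).trans (HasSum.tsum_eq
    ((hasSum_totalDer P v).add (hasSum_totalDer Q v)))
  rw [Subalgebra.coe_add, pderivJet_add P.2 Q.2, Pi.add_apply, mul_add]

theorem totalDer_smul (r : ℝ) (P : diffPoly) :
    totalDer ((r • P : diffPoly) : (ℕ → ℝ) → ℝ) = r • totalDer P := by
  funext v
  refine (tsum_congr fun k => ?_).trans (HasSum.tsum_eq
    ((hasSum_totalDer P v).mul_left r))
  rw [Subalgebra.coe_smul, pderivJet_smul, Pi.smul_apply, smul_eq_mul, mul_left_comm]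

theorem totalDer_mul (P Q : diffPoly) :
    totalDer ((P * Q : diffPoly) : (ℕ → ℝ) → ℝ) =
      (P : (ℕ → ℝ) → ℝ) * totalDer Q + (Q : (ℕ → ℝ) → ℝ) * totalDer P := by
  funext v
  refine (tsum_congr fun k => ?_).trans (HasSum.tsum_eq
    (((hasSum_totalDer Q v).mul_left ((P : (ℕ → ℝ) → ℝ) v)).add
      ((hasSum_totalDer P v).mul_left ((Q : (ℕ → ℝ) → ℝ) v))))
  rw [Subalgebra.coe_mul, pderivJet_mul P.2 Q.2, Pi.add_apply, Pi.mul_apply, Pi.mul_apply]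
  ring

/-- The total `x`-derivative as a derivation of differential polynomials. -/
def jetTotal : Derivation ℝ diffPoly diffPoly :=
  Derivation.mk'
    { toFun := fun P => ⟨totalDer P, totalDer_mem P.2⟩
      map_add' := fun P Q => Subtype.ext (totalDer_add P Q)
      map_smul' := fun r P => Subtype.ext (totalDer_smul r P) }
    fun P Q => Subtype.ext (totalDer_mul P Q)

theorem coe_jetTotal (P : diffPoly) : (jetTotal P : (ℕ → ℝ) → ℝ) = totalDer P := rfl

/-- The jet variable `u^(k)`. -/
def coord (k : ℕ) : diffPoly := ⟨fun v => v k, coord_mem k⟩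

/-- The `n`-th derivative of a smooth function, evaluated at `u`. -/
def coeff {φ : ℝ → ℝ} (hφ : ContDiff ℝ ∞ φ) (n : ℕ) : diffPoly :=
  ⟨fun v => iteratedDeriv n φ (v 0), comp_mem (by
    rw [iteratedDeriv_eq_iterate]; exact hφ.iterate_deriv n)⟩

theorem coord_apply (k : ℕ) (v : ℕ → ℝ) : (coord k : (ℕ → ℝ) → ℝ) v = v k := rfl

theorem coeff_apply {φ : ℝ → ℝ} (hφ : ContDiff ℝ ∞ φ) (n : ℕ) (v : ℕ → ℝ) :
    (coeff hφ n : (ℕ → ℝ) → ℝ) v = iteratedDeriv n φ (v 0) := rfl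

theorem jetPartial_coord (k j : ℕ) : jetPartial k (coord j) = if j = k then 1 else 0 := by
  refine Subtype.ext ((pderivJet_coord j k).trans ?_)
  split_ifs <;> rfl

theorem jetPartial_coeff {φ : ℝ → ℝ} (hφ : ContDiff ℝ ∞ φ) (k n : ℕ) :
    jetPartial k (coeff hφ n) = if k = 0 then coeff hφ (n + 1) else 0 := by
  refine Subtype.ext ((pderivJet_comp (iteratedDeriv n φ) k).trans ?_)
  rw [← iteratedDeriv_succ]
  split_ifs <;> rfl

theorem jetTotal_coord (k : ℕ) : jetTotal (coord k) = coord (k + 1) := by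
  refine Subtype.ext (funext fun v => ?_)
  change ∑' j : ℕ, v (j + 1) * pderivJet (fun v => v k) j v = v (k + 1)
  simp [pderivJet_coord]

theorem jetTotal_coeff {φ : ℝ → ℝ} (hφ : ContDiff ℝ ∞ φ) (n : ℕ) :
    jetTotal (coeff hφ n) = coeff hφ (n + 1) * coord 1 := by
  refine Subtype.ext (funext fun v => ?_)
  change ∑' j : ℕ, v (j + 1) * pderivJet (fun v => iteratedDeriv n φ (v 0)) j v =
    iteratedDeriv (n + 1) φ (v 0) * v 1
  simp [pderivJet_comp, iteratedDeriv_succ, mul_comm]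

theorem ext_derivation {D₁ D₂ : Derivation ℝ diffPoly diffPoly}
    (hcoord : ∀ k, D₁ (coord k) = D₂ (coord k))
    (hcoeff : ∀ (φ : ℝ → ℝ) (hφ : ContDiff ℝ ∞ φ), D₁ (coeff hφ 0) = D₂ (coeff hφ 0)) :
    D₁ = D₂ := by
  refine Derivation.ext_of_adjoin_eq_top _ Algebra.adjoin_adjoin_coe_preimage ?_
  rintro ⟨P, hP⟩ (⟨k, rfl⟩ | ⟨φ, hφ, rfl⟩)
  · exact hcoord k
  · exact hcoeff φ hφ

theorem lie_jetPartial_zero : ⁅jetPartial 0, jetTotal⁆ = 0 := by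
  refine ext_derivation (fun k => ?_) fun φ hφ => ?_
  · rcases k with _ | k <;>
      simp [Derivation.commutator_apply, jetTotal_coord, jetPartial_coord]
  · simp [Derivation.commutator_apply, jetTotal_coeff, jetPartial_coeff, jetPartial_coord,
      mul_comm]

theorem lie_jetPartial_succ (k : ℕ) : ⁅jetPartial (k + 1), jetTotal⁆ = jetPartial k := by
  refine ext_derivation (fun j => ?_) fun φ hφ => ?_
  · by_cases h : j = k + 1 <;>
      simp [Derivation.commutator_apply, jetTotal_coord, jetPartial_coord, h]
  · rcases k with _ | k <;>
      simp [Derivation.commutator_apply, jetTotal_coeff, jetPartial_coeff, jetPartial_coord]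

theorem jetPartial_zero_jetTotal (P : diffPoly) :
    jetPartial 0 (jetTotal P) = jetTotal (jetPartial 0 P) :=
  sub_eq_zero.1 (DFunLike.congr_fun lie_jetPartial_zero P)

theorem jetPartial_succ_jetTotal (k : ℕ) (P : diffPoly) :
    jetPartial (k + 1) (jetTotal P) = jetTotal (jetPartial (k + 1) P) + jetPartial k P :=
  sub_eq_iff_eq_add'.1 (DFunLike.congr_fun (lie_jetPartial_succ k) P)

theorem coe_iterate_jetTotal (n : ℕ) (P : diffPoly) :
    ((jetTotal^[n] P : diffPoly) : (ℕ → ℝ) → ℝ) = totalDer^[n] P :=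
  Function.Semiconj.iterate_right (f := ((↑) : diffPoly → (ℕ → ℝ) → ℝ)) coe_jetTotal n P

theorem eulerOp_eq_sum {P : diffPoly} {N : ℕ} (hN : ∀ k ≥ N, jetPartial k P = 0) :
    EulerOp P =
      ((∑ k ∈ Finset.range N, (-1 : ℝ) ^ k • jetTotal^[k] (jetPartial k P) : diffPoly) :
        (ℕ → ℝ) → ℝ) := by
  funext v
  rw [EulerOp, tsum_eq_sum (s := Finset.range N)]
  · simp [coe_iterate_jetTotal, coe_jetPartial]
  · intro k hk
    rw [← coe_jetPartial, ← coe_iterate_jetTotal, hN k (by simpa using hk), iterate_map_zero]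
    simp

theorem eulerOp_add (P Q : diffPoly) :
    EulerOp ((P + Q : diffPoly) : (ℕ → ℝ) → ℝ) = EulerOp P + EulerOp Q := by
  obtain ⟨M, hM⟩ := exists_jetPartial_eq_zero P
  obtain ⟨N, hN⟩ := exists_jetPartial_eq_zero Q
  have hM' : ∀ k ≥ max M N, jetPartial k P = 0 := fun k hk => hM k (le_of_max_le_left hk)
  have hN' : ∀ k ≥ max M N, jetPartial k Q = 0 := fun k hk => hN k (le_of_max_le_right hk)
  rw [eulerOp_eq_sum hM', eulerOp_eq_sum hN',
    eulerOp_eq_sum (N := max M N) fun k hk => by rw [map_add, hM' k hk, hN' k hk, add_zero],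
    ← Subalgebra.coe_add, ← Finset.sum_add_distrib]
  simp [iterate_map_add]

theorem eulerOp_smul (r : ℝ) (P : diffPoly) :
    EulerOp ((r • P : diffPoly) : (ℕ → ℝ) → ℝ) = r • EulerOp P := by
  obtain ⟨N, hN⟩ := exists_jetPartial_eq_zero P
  rw [eulerOp_eq_sum hN,
    eulerOp_eq_sum (N := N) fun k hk => by rw [Derivation.map_smul, hN k hk, smul_zero],
    ← Subalgebra.coe_smul, Finset.smul_sum]
  congr 2
  funext k
  have (n : ℕ) (Q : diffPoly) : jetTotal^[n] (r • Q) = r • jetTotal^[n] Q :=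
    ((Function.Commute.iterate_left fun Q => jetTotal.map_smul r Q) n) Q
  rw [Derivation.map_smul, this, smul_comm]

theorem sum_iterate_jetTotal (P : diffPoly) (N : ℕ) :
    ∑ k ∈ Finset.range (N + 1), (-1 : ℝ) ^ k • jetTotal^[k] (jetPartial k (jetTotal P)) =
      (-1 : ℝ) ^ N • jetTotal^[N + 1] (jetPartial N P) := by
  induction N with
  | zero => simp [jetPartial_zero_jetTotal]
  | succ N ih =>
    rw [Finset.sum_range_succ, ih, jetPartial_succ_jetTotal, iterate_map_add,
      ← Function.iterate_succ_apply]
    simp [pow_succ]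

theorem eulerOp_jetTotal (P : diffPoly) : EulerOp (jetTotal P : (ℕ → ℝ) → ℝ) = 0 := by
  obtain ⟨N, hN⟩ := exists_jetPartial_eq_zero P
  have hN' : ∀ k ≥ N + 1, jetPartial k (jetTotal P) = 0 := by
    rintro (_ | k) hk
    · omega
    · rw [jetPartial_succ_jetTotal, hN _ (by omega), hN _ (by omega), map_zero, add_zero]
  rw [eulerOp_eq_sum hN', sum_iterate_jetTotal, hN N le_rfl, iterate_map_zero, smul_zero]
  rfl


/-- The Euler–Lagrange operator on densities that involve jets of order at most two. -/
def eulerTwo : diffPoly →ₗ[ℝ] diffPoly :=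
  (jetPartial 0).toLinearMap - jetTotal.toLinearMap ∘ₗ (jetPartial 1).toLinearMap +
    jetTotal.toLinearMap ∘ₗ jetTotal.toLinearMap ∘ₗ (jetPartial 2).toLinearMap

theorem eulerTwo_apply (P : diffPoly) :
    eulerTwo P =
      jetPartial 0 P - jetTotal (jetPartial 1 P) + jetTotal (jetTotal (jetPartial 2 P)) := rfl

theorem eulerOp_eq_eulerTwo {P : diffPoly} (hP : ∀ k ≥ 3, jetPartial k P = 0) :
    EulerOp P = (eulerTwo P : (ℕ → ℝ) → ℝ) := by
  rw [eulerOp_eq_sum hP, eulerTwo_apply]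
  simp [Finset.sum_range_succ, sub_eq_add_neg]

variable {c p s f g h : ℝ → ℝ} (hc : ContDiff ℝ ∞ c) (hp : ContDiff ℝ ∞ p) (hs : ContDiff ℝ ∞ s)
  (hf : ContDiff ℝ ∞ f) (hg : ContDiff ℝ ∞ g) (hh : ContDiff ℝ ∞ h)

/-- The coefficient of `ε²` in the `D`-operator. -/
def dopTwo : diffPoly :=
  (-(1 / 2) : ℝ) • (coeff hc 0 * coeff hh 3 * (coord 1 * coord 1))

/-- The coefficient of `ε⁴` in the `D`-operator. -/
def dopFour : diffPoly :=
  (coeff hp 0 * coeff hh 3 + (3 / 10 : ℝ) • (coeff hc 0 * coeff hc 0 * coeff hh 4)) *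
      (coord 2 * coord 2) +
    (coeff hs 0 * coeff hh 3 - (1 / 8 : ℝ) • (coeff hc 0 * coeff hc 2 * coeff hh 4)
      - (1 / 8 : ℝ) • (coeff hc 0 * coeff hc 1 * coeff hh 5)
      - (1 / 24 : ℝ) • (coeff hc 0 * coeff hc 0 * coeff hh 6)
      - (1 / 6 : ℝ) • (coeff hp 1 * coeff hh 4) - (1 / 6 : ℝ) • (coeff hp 0 * coeff hh 5)) *
      (coord 1 * coord 1 * (coord 1 * coord 1))

theorem dop_eq (ε : ℝ) :
    Dop c p s h ε =
      ((coeff hh 0 + ε ^ 2 • dopTwo hc hh + ε ^ 4 • dopFour hc hp hs hh : diffPoly) :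
        (ℕ → ℝ) → ℝ) := by
  funext v
  simp only [Dop, cCoef, pCoef, sCoef, dopTwo, dopFour, Subalgebra.coe_add, Subalgebra.coe_sub,
    Subalgebra.coe_mul, Subalgebra.coe_smul, Pi.add_apply, Pi.sub_apply, Pi.mul_apply,
    Pi.smul_apply, smul_eq_mul, coord_apply, coeff_apply, iteratedDeriv_zero, iteratedDeriv_one]
  ring

theorem eulerOp_dop (ε : ℝ) :
    EulerOp (Dop c p s h ε) =
      ((coeff hh 1 + ε ^ 2 • eulerTwo (dopTwo hc hh) + ε ^ 4 • eulerTwo (dopFour hc hp hs hh) :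
        diffPoly) : (ℕ → ℝ) → ℝ) := by
  rw [dop_eq hc hp hs hh, eulerOp_eq_eulerTwo, map_add, map_add, map_smul, map_smul,
    eulerTwo_apply (coeff hh 0)]
  · simp [jetPartial_coeff]
  · intro k hk
    obtain ⟨k, rfl⟩ := Nat.exists_eq_add_of_le' hk
    simp [dopTwo, dopFour, jetPartial_coeff, jetPartial_coord]

theorem eulerTwo_dopTwo :
    eulerTwo (dopTwo hc hh) = coeff hc 0 * coeff hh 3 * coord 2 +
      (1 / 2 : ℝ) • ((coeff hc 1 * coeff hh 3 + coeff hc 0 * coeff hh 4) *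
        (coord 1 * coord 1)) := by
  refine Subtype.ext (funext fun v => ?_)
  simp only [eulerTwo_apply, dopTwo, Derivation.leibniz, Derivation.map_smul, map_add, map_zero,
    jetPartial_coeff, jetPartial_coord, jetTotal_coeff, jetTotal_coord, OfNat.ofNat_ne_zero,
    one_ne_zero, OfNat.one_ne_ofNat, if_true, if_false,
    Nat.reduceAdd, Derivation.map_one_eq_zero, zero_add,
    Subalgebra.coe_add, Subalgebra.coe_sub, Subalgebra.coe_zero, Subalgebra.coe_one,
    Subalgebra.coe_mul, Subalgebra.coe_smul, Pi.add_apply, Pi.sub_apply, Pi.mul_apply,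
    Pi.zero_apply, Pi.one_apply, Pi.smul_apply, smul_eq_mul, coord_apply, coeff_apply]
  ring

/-- Density whose total derivative is the `ε²`-coefficient of the Poisson bracket. -/
def fluxTwo : diffPoly :=
  coeff hf 1 * eulerTwo (dopTwo hc hg) +
    (1 / 2 : ℝ) • (coeff hc 0 * (coeff hf 3 * coeff hg 2 - coeff hf 2 * coeff hg 3) *
      (coord 1 * coord 1))

theorem jetTotal_fluxTwo :
    jetTotal (fluxTwo hc hf hg) =
      coeff hf 1 * jetTotal (eulerTwo (dopTwo hc hg)) +
        eulerTwo (dopTwo hc hf) * jetTotal (coeff hg 1) := by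
  refine Subtype.ext (funext fun v => ?_)
  simp only [fluxTwo, eulerTwo_dopTwo, Derivation.leibniz, Derivation.map_smul, map_add, map_sub,
    jetTotal_coeff, jetTotal_coord, Nat.reduceAdd,
    Subalgebra.coe_add, Subalgebra.coe_sub,
    Subalgebra.coe_mul, Subalgebra.coe_smul, Pi.add_apply, Pi.sub_apply, Pi.mul_apply,
    Pi.smul_apply, smul_eq_mul, coord_apply, coeff_apply]
  ring

/-- Density whose total derivative is the `ε⁴`-coefficient of the Poisson bracket. -/
def fluxFour : diffPoly :=
  coeff hf 1 * eulerTwo (dopFour hc hp hs hg) +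
    ((3 / 5 : ℝ) • (coeff hc 0 * coeff hc 0 * (coeff hf 4 * coeff hg 2 - coeff hf 2 * coeff hg 4)) +
      (2 : ℝ) • (coeff hp 0 * (coeff hf 3 * coeff hg 2 - coeff hf 2 * coeff hg 3))) *
      (coord 1 * coord 3 - (1 / 2 : ℝ) • (coord 2 * coord 2)) +
    (1 / 2 : ℝ) • (coeff hc 0 * coeff hc 0 * coeff hf 3 * coeff hg 3 * (coord 2 * coord 2)) +
    ((6 / 5 : ℝ) • (coeff hc 0 * coeff hc 1 * (coeff hf 4 * coeff hg 2 - coeff hf 2 * coeff hg 4)) +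
      (1 / 2 : ℝ) • (coeff hc 0 * coeff hc 1 * coeff hf 3 * coeff hg 3) +
      (3 / 5 : ℝ) • (coeff hc 0 * coeff hc 0 *
        (coeff hf 5 * coeff hg 2 - coeff hf 2 * coeff hg 5 + coeff hf 3 * coeff hg 4)) -
      (1 / 10 : ℝ) • (coeff hc 0 * coeff hc 0 * coeff hf 4 * coeff hg 3) +
      (2 : ℝ) • (coeff hp 1 * (coeff hf 3 * coeff hg 2 - coeff hf 2 * coeff hg 3)) +
      (2 : ℝ) • (coeff hp 0 * (coeff hf 4 * coeff hg 2 - coeff hf 2 * coeff hg 4))) *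
      (coord 1 * coord 1 * coord 2) +
    ((3 / 8 : ℝ) • (coeff hc 0 * coeff hc 1 *
        (coeff hf 5 * coeff hg 2 - coeff hf 2 * coeff hg 5 + coeff hf 3 * coeff hg 4)) -
      (1 / 8 : ℝ) • (coeff hc 0 * coeff hc 1 * coeff hf 4 * coeff hg 3) +
      (3 / 8 : ℝ) • (coeff hc 0 * coeff hc 2 *
        (coeff hf 4 * coeff hg 2 - coeff hf 2 * coeff hg 4)) +
      (1 / 8 : ℝ) • (coeff hc 1 * coeff hc 1 * coeff hf 3 * coeff hg 3) +
      (1 / 8 : ℝ) • (coeff hc 0 * coeff hc 0 *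
        (coeff hf 6 * coeff hg 2 - coeff hf 2 * coeff hg 6 + coeff hf 3 * coeff hg 5 -
          coeff hf 5 * coeff hg 3 + coeff hf 4 * coeff hg 4)) -
      (3 : ℝ) • (coeff hs 0 * (coeff hf 3 * coeff hg 2 - coeff hf 2 * coeff hg 3)) +
      (1 / 2 : ℝ) • (coeff hp 1 * (coeff hf 4 * coeff hg 2 - coeff hf 2 * coeff hg 4)) +
      (1 / 2 : ℝ) • (coeff hp 0 * (coeff hf 5 * coeff hg 2 - coeff hf 2 * coeff hg 5 +
        coeff hf 3 * coeff hg 4 - coeff hf 4 * coeff hg 3))) *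
      (coord 1 * coord 1 * (coord 1 * coord 1))

theorem eulerTwo_dopFour_apply (v : ℕ → ℝ) :
    let C (n : ℕ) := iteratedDeriv n c (v 0)
    let P (n : ℕ) := iteratedDeriv n p (v 0)
    let S (n : ℕ) := iteratedDeriv n s (v 0)
    let H (n : ℕ) := iteratedDeriv n h (v 0)
    (eulerTwo (dopFour hc hp hs hh) : (ℕ → ℝ) → ℝ) v =
      (2 * P 0 * H 3 + 3 / 5 * C 0 ^ 2 * H 4) * v 4 +
      (12 / 5 * C 0 * C 1 * H 4 + 6 / 5 * C 0 ^ 2 * H 5 + 4 * P 1 * H 3 + 4 * P 0 * H 4) *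
        (v 1 * v 3 + 3 / 4 * v 2 ^ 2) +
      (39 / 10 * C 0 * C 1 * H 5 + 27 / 10 * C 0 * C 2 * H 4 + 11 / 10 * C 0 ^ 2 * H 6 +
        6 / 5 * C 1 ^ 2 * H 4 + 2 * P 2 * H 3 - 12 * S 0 * H 3 + 6 * P 1 * H 4 +
        4 * P 0 * H 5) * v 1 ^ 2 * v 2 +
      (5 / 8 * C 0 * C 1 * H 6 + 3 / 4 * C 0 * C 2 * H 5 + 3 / 8 * C 0 * C 3 * H 4 +
        1 / 8 * C 0 ^ 2 * H 7 + 3 / 8 * C 1 * C 2 * H 4 + 3 / 8 * C 1 ^ 2 * H 5 -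
        3 * S 1 * H 3 + 1 / 2 * P 2 * H 4 - 3 * S 0 * H 4 + P 1 * H 5 +
        1 / 2 * P 0 * H 6) * v 1 ^ 4 := by
  intro C P S H
  simp only [eulerTwo_apply, dopFour, Derivation.leibniz, Derivation.map_smul, map_add, map_sub,
    map_zero,
    jetPartial_coeff, jetPartial_coord, jetTotal_coeff, jetTotal_coord, OfNat.ofNat_ne_zero,
    one_ne_zero, OfNat.ofNat_ne_one, OfNat.one_ne_ofNat, if_true, if_false,
    Nat.reduceAdd, Derivation.map_one_eq_zero, zero_add,
    Subalgebra.coe_add, Subalgebra.coe_sub, Subalgebra.coe_zero, Subalgebra.coe_one,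
    Subalgebra.coe_mul, Subalgebra.coe_smul, Pi.add_apply, Pi.sub_apply, Pi.mul_apply,
    Pi.zero_apply, Pi.one_apply, Pi.smul_apply, smul_eq_mul, coord_apply, coeff_apply, C, P, S, H]
  ring

theorem jetTotal_fluxFour :
    jetTotal (fluxFour hc hp hs hf hg) =
      coeff hf 1 * jetTotal (eulerTwo (dopFour hc hp hs hg)) +
        eulerTwo (dopTwo hc hf) * jetTotal (eulerTwo (dopTwo hc hg)) +
        eulerTwo (dopFour hc hp hs hf) * jetTotal (coeff hg 1) := by
  refine Subtype.ext (funext fun v => ?_)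
  simp only [fluxFour, eulerTwo_dopTwo, Derivation.leibniz, Derivation.map_smul, map_add, map_sub,
    jetTotal_coeff, jetTotal_coord, Nat.reduceAdd,
    Subalgebra.coe_add, Subalgebra.coe_sub,
    Subalgebra.coe_mul, Subalgebra.coe_smul, Pi.add_apply, Pi.sub_apply, Pi.mul_apply,
    Pi.smul_apply, smul_eq_mul, coord_apply, coeff_apply, eulerTwo_dopFour_apply]
  ring

theorem exists_jetTotal_eq_coeff_mul {f g : ℝ → ℝ} (hf : ContDiff ℝ ∞ f) (hg : ContDiff ℝ ∞ g) :
    ∃ W : diffPoly, jetTotal W = coeff hf 1 * jetTotal (coeff hg 1) := by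
  have hcont : ContDiff ℝ ∞ fun y => iteratedDeriv 1 f y * iteratedDeriv 2 g y := by
    simp only [iteratedDeriv_eq_iterate]
    exact (hf.iterate_deriv 1).mul (hg.iterate_deriv 2)
  have hderiv (y : ℝ) := intervalIntegral.integral_hasDerivAt_right
    (hcont.continuous.intervalIntegrable 0 y)
    (hcont.continuous.stronglyMeasurableAtFilter _ _) hcont.continuous.continuousAt
  have hΦ : ContDiff ℝ ∞ fun y => ∫ z in (0 : ℝ)..y, iteratedDeriv 1 f z * iteratedDeriv 2 g z := by
    rw [contDiff_infty_iff_deriv, funext fun y => (hderiv y).deriv]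
    exact ⟨fun y => (hderiv y).differentiableAt, hcont⟩
  refine ⟨coeff hΦ 0, Subtype.ext (funext fun v => ?_)⟩
  simp only [jetTotal_coeff, Subalgebra.coe_mul, Pi.mul_apply, coeff_apply, coord_apply,
    Nat.reduceAdd, zero_add]
  rw [iteratedDeriv_one, (hderiv _).deriv, mul_assoc]

theorem exists_eulerOp_bracket {c p s f g : ℝ → ℝ} (hc : ContDiff ℝ ∞ c) (hp : ContDiff ℝ ∞ p)
    (hs : ContDiff ℝ ∞ s) (hf : ContDiff ℝ ∞ f) (hg : ContDiff ℝ ∞ g) (v : ℕ → ℝ) :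
    ∃ a b : ℝ, ∀ ε : ℝ,
      EulerOp (fun w => EulerOp (Dop c p s f ε) w * totalDer (EulerOp (Dop c p s g ε)) w) v =
        a * ε ^ 6 + b * ε ^ 8 := by
  obtain ⟨W, hW⟩ := exists_jetTotal_eq_coeff_mul hf hg
  let A₂ := eulerTwo (dopTwo hc hf)
  let A₄ := eulerTwo (dopFour hc hp hs hf)
  let B₂ := eulerTwo (dopTwo hc hg)
  let B₄ := eulerTwo (dopFour hc hp hs hg)
  let R : diffPoly := A₂ * jetTotal B₄ + A₄ * jetTotal B₂
  let T : diffPoly := A₄ * jetTotal B₄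
  refine ⟨EulerOp R v, EulerOp T v, fun ε => ?_⟩
  have key : (coeff hf 1 + ε ^ 2 • A₂ + ε ^ 4 • A₄) *
      jetTotal (coeff hg 1 + ε ^ 2 • B₂ + ε ^ 4 • B₄) =
      jetTotal (W + ε ^ 2 • fluxTwo hc hf hg + ε ^ 4 • fluxFour hc hp hs hf hg) +
        ε ^ 6 • R + ε ^ 8 • T := by
    simp only [map_add, Derivation.map_smul, hW, jetTotal_fluxTwo, jetTotal_fluxFour, R, T, A₂, A₄,
      B₂, B₄]
    simp only [Algebra.smul_def, map_pow]
    ring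
  have hprod : (fun w => EulerOp (Dop c p s f ε) w * totalDer (EulerOp (Dop c p s g ε)) w) =
      ((jetTotal (W + ε ^ 2 • fluxTwo hc hf hg + ε ^ 4 • fluxFour hc hp hs hf hg) +
        ε ^ 6 • R + ε ^ 8 • T : diffPoly) : (ℕ → ℝ) → ℝ) := by
    rw [← key, eulerOp_dop hc hp hs hf, eulerOp_dop hc hp hs hg]
    rfl
  rw [hprod, eulerOp_add, eulerOp_add, eulerOp_jetTotal, eulerOp_smul, eulerOp_smul]
  simp [mul_comm]

end diffPoly

/-- Dubrovin: for any pair of smooth functions `f, g`, the local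
functionals `H_f = ∫D_{(c,p,s)}(f)dx` and `H_g = ∫D_{(c,p,s)}(g)dx` commute up to
order `ε⁶`: the coefficients of `ε⁰, ..., ε⁵` (in particular of `ε⁰, ε², ε⁴`) of
`E((δH_f/δu)·(d/dx)(δH_g/δu))` vanish identically as differential polynomials.
In particular (taking `g := h`) every `H_f` is an approximate conserved quantity,
up to order `ε⁶`, of the PDE (eveq). -/
theorem Dop_functionals_commute_up_to_eps6
    (h c p s : ℝ → ℝ)
    (hh : ContDiff ℝ (⊤ : ℕ∞) h) (hc : ContDiff ℝ (⊤ : ℕ∞) c)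
    (hp : ContDiff ℝ (⊤ : ℕ∞) p) (hs : ContDiff ℝ (⊤ : ℕ∞) s)
    (f g : ℝ → ℝ)
    (hf : ContDiff ℝ (⊤ : ℕ∞) f) (hg : ContDiff ℝ (⊤ : ℕ∞) g) :
    ∀ v : ℕ → ℝ, ∀ j < 6,
      iteratedDeriv j (fun ε =>
        EulerOp (fun w =>
          EulerOp (Dop c p s f ε) w * totalDer (EulerOp (Dop c p s g ε)) w) v) 0 = 0 := by
  intro v j hj
  obtain ⟨a, b, hab⟩ := diffPoly.exists_eulerOp_bracket hc hp hs hf hg v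
  simp only [hab]
  rw [iteratedDeriv_fun_add (by fun_prop) (by fun_prop), iteratedDeriv_const_mul_field,
    iteratedDeriv_const_mul_field, iteratedDeriv_pow, iteratedDeriv_pow,
    zero_pow (by omega), zero_pow (by omega)]
  simp
end
end

section
/- Let h, c, p, s be smooth with c nowhere vanishing and h''' not identically zero. (a) For any smooth functions f, f₁, f₂ of one variable, the functional S_f = S₀ − H^ε_f is conserved up to O(ε⁴) along the PDE (eveq). (b) Let φ be a smooth function, strictly monotone on an interval (x_−, x_+) with c(φ(x)) ≠ 0 there, let f satisfy c(φ(x))·f'(φ(x)) = x for all x ∈ (x_−, x_+), and let f₁ satisfy f₁'(v) = (1/(2c(v)))·(d²/dv²)( c(v) / (c(v)f'(v))' ). Then the variational derivative δS_f/δu, evaluated at t = 0 and at u = φ(x), is O(ε⁴), i.e. its ε⁰- and ε²-coefficients vanish for all x ∈ (x_−, x_+). -/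
open Set

noncomputable section

/-- The density of the string functional `S_f = S₀ - H^ε_f`, where
`S₀ = ∫(x·D(r) + t·D(q) + ε⁴·e(u)·u_x³)dx` and `H^ε_f` is the truncation at order
`ε⁴` of `∫D_{(c,p,s)}(f + ε²f₁ + ε⁴f₂)dx`. -/
def SfFam (c p s r q e f f₁ f₂ : ℝ → ℝ) (ε x t : ℝ) (v : ℕ → ℝ) : ℝ :=
  x * Dop c p s r ε v + t * Dop c p s q ε v + ε^4 * e (v 0) * (v 1)^3
    - (Dop c p s f ε v + ε^2 * f₁ (v 0) - ε^4/2 * cCoef c f₁ (v 0) * (v 1)^2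
        + ε^4 * f₂ (v 0))

/-- Smooth real functions of one variable. -/
abbrev SmoothFun : Type := {g : ℝ → ℝ // ContDiff ℝ (⊤ : ℕ∞) g}

/-- Syntactic differential polynomials: polynomials in `x` and the jet variables whose coefficients
are derivatives of smooth functions of `u`. -/
inductive DiffPoly : Type
  | fn (g : SmoothFun) (n : ℕ) : DiffPoly
  | X : DiffPoly
  | U (k : ℕ) : DiffPoly
  | one : DiffPoly
  | smul (a : ℝ) (P : DiffPoly) : DiffPoly
  | add (P Q : DiffPoly) : DiffPoly
  | mul (P Q : DiffPoly) : DiffPoly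

namespace DiffPoly

instance : One DiffPoly := ⟨one⟩
instance : SMul ℝ DiffPoly := ⟨smul⟩
instance : Add DiffPoly := ⟨add⟩
instance : Mul DiffPoly := ⟨mul⟩

/-- The density represented by a differential polynomial. -/
def den : DiffPoly → ℝ → (ℕ → ℝ) → ℝ
  | fn g n, _, v => iteratedDeriv n g.1 (v 0)
  | X, x, _ => x
  | U k, _, v => v k
  | one, _, _ => 1
  | smul a P, x, v => a * P.den x v
  | add P Q, x, v => P.den x v + Q.den x v
  | mul P Q, x, v => P.den x v * Q.den x v

/-- Partial derivative with respect to the `k`-th jet variable. -/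
def pd (k : ℕ) : DiffPoly → DiffPoly
  | fn g n => if k = 0 then fn g (n + 1) else (0 : ℝ) • one
  | X => (0 : ℝ) • one
  | U j => if k = j then one else (0 : ℝ) • one
  | one => (0 : ℝ) • one
  | smul a P => a • P.pd k
  | add P Q => P.pd k + Q.pd k
  | mul P Q => P.pd k * Q + P * Q.pd k

/-- Partial derivative with respect to the explicit variable `x`. -/
def px : DiffPoly → DiffPoly
  | fn _ _ => (0 : ℝ) • one
  | X => one
  | U _ => (0 : ℝ) • one
  | one => (0 : ℝ) • one
  | smul a P => a • P.px
  | add P Q => P.px + Q.px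
  | mul P Q => P.px * Q + P * Q.px

/-- Total derivative with respect to `x`. -/
def D : DiffPoly → DiffPoly
  | fn g n => fn g (n + 1) * U 1
  | X => one
  | U j => U (j + 1)
  | one => (0 : ℝ) • one
  | smul a P => a • P.D
  | add P Q => P.D + Q.D
  | mul P Q => P.D * Q + P * Q.D

/-- A bound for the order of the jet variables that occur. -/
def ord : DiffPoly → ℕ
  | fn _ _ => 0
  | X => 0
  | U j => j
  | one => 0
  | smul _ P => P.ord
  | add P Q => max P.ord Q.ord
  | mul P Q => max P.ord Q.ord

/-- Partial sums of the Euler-Lagrange expression. -/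
def eulerSum (P : DiffPoly) : ℕ → DiffPoly
  | 0 => P.pd 0
  | n + 1 => P.eulerSum n + ((-1 : ℝ) ^ (n + 1)) • (D^[n + 1] (P.pd (n + 1)))

/-- The Euler-Lagrange expression. -/
def euler (P : DiffPoly) : DiffPoly := P.eulerSum P.ord

section simps

variable (P Q : DiffPoly) (a : ℝ) (k n : ℕ) (g : SmoothFun)
  (x : ℝ) (v : ℕ → ℝ)

@[simp] theorem den_fn : (fn g n).den x v = iteratedDeriv n g.1 (v 0) := rfl
@[simp] theorem den_X : X.den x v = x := rfl
@[simp] theorem den_U : (U k).den x v = v k := rfl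
@[simp] theorem den_one : one.den x v = 1 := rfl
@[simp] theorem den_smul : (a • P).den x v = a * P.den x v := rfl
@[simp] theorem den_add : (P + Q).den x v = P.den x v + Q.den x v := rfl
@[simp] theorem den_mul : (P * Q).den x v = P.den x v * Q.den x v := rfl

@[simp] theorem pd_fn :
    (fn g n).pd k = if k = 0 then fn g (n + 1) else (0 : ℝ) • one := rfl
@[simp] theorem pd_X : X.pd k = (0 : ℝ) • one := rfl
@[simp] theorem pd_U : (U n).pd k = if k = n then one else (0 : ℝ) • one := rfl
@[simp] theorem pd_one : one.pd k = (0 : ℝ) • one := rfl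
@[simp] theorem pd_smul : (a • P).pd k = a • P.pd k := rfl
@[simp] theorem pd_add : (P + Q).pd k = P.pd k + Q.pd k := rfl
@[simp] theorem pd_mul : (P * Q).pd k = P.pd k * Q + P * Q.pd k := rfl

@[simp] theorem D_fn : (fn g n).D = fn g (n + 1) * U 1 := rfl
@[simp] theorem D_X : X.D = one := rfl
@[simp] theorem D_U : (U n).D = U (n + 1) := rfl
@[simp] theorem D_one : one.D = (0 : ℝ) • one := rfl
@[simp] theorem D_smul : (a • P).D = a • P.D := rfl
@[simp] theorem D_add : (P + Q).D = P.D + Q.D := rfl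
@[simp] theorem D_mul : (P * Q).D = P.D * Q + P * Q.D := rfl

@[simp] theorem ord_fn : (fn g n).ord = 0 := rfl
@[simp] theorem ord_X : X.ord = 0 := rfl
@[simp] theorem ord_U : (U n).ord = n := rfl
@[simp] theorem ord_one : one.ord = 0 := rfl
@[simp] theorem ord_smul : (a • P).ord = P.ord := rfl
@[simp] theorem ord_add : (P + Q).ord = max P.ord Q.ord := rfl
@[simp] theorem ord_mul : (P * Q).ord = max P.ord Q.ord := rfl

theorem iterate_D_add : D^[k] (P + Q) = D^[k] P + D^[k] Q := by
  induction k generalizing P Q with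
  | zero => rfl
  | succ k ih => rw [Function.iterate_succ_apply, D_add, ih]; rfl

theorem iterate_D_smul : D^[k] (a • P) = a • D^[k] P := by
  induction k generalizing P with
  | zero => rfl
  | succ k ih => rw [Function.iterate_succ_apply, D_smul, ih]; rfl

end simps

theorem hasDerivAt_iteratedDeriv (g : SmoothFun) (n : ℕ) (y : ℝ) :
    HasDerivAt (iteratedDeriv n g.1) (iteratedDeriv (n + 1) g.1 y) y := by
  rw [iteratedDeriv_succ]
  exact ((g.2.differentiable_iteratedDeriv n (by exact_mod_cast WithTop.coe_lt_top _)) y).hasDerivAt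

theorem hasDerivAt_den (P : DiffPoly) (k : ℕ) (x : ℝ) (v : ℕ → ℝ) :
    HasDerivAt (fun y => P.den x (Function.update v k y)) ((P.pd k).den x v) (v k) := by
  induction P with
  | fn g n =>
    by_cases hk : k = 0
    · subst hk
      simpa using hasDerivAt_iteratedDeriv g n (v 0)
    · have h0 : (0 : ℕ) ≠ k := fun h => hk h.symm
      simpa [hk, Function.update_of_ne h0] using hasDerivAt_const (v k) _
  | X => simpa using hasDerivAt_const (v k) x
  | U j =>
    by_cases hk : k = j
    · subst hk
      simpa using! hasDerivAt_id (v k)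
    · have h0 : j ≠ k := fun h => hk h.symm
      simpa [hk, Function.update_of_ne h0] using hasDerivAt_const (v k) (v j)
  | one => simpa using hasDerivAt_const (v k) (1 : ℝ)
  | smul a P ih => exact ih.const_mul a
  | add P Q ihP ihQ => exact ihP.add ihQ
  | mul P Q ihP ihQ => simpa using! ihP.mul ihQ

theorem hasDerivAt_den_x (P : DiffPoly) (x : ℝ) (v : ℕ → ℝ) :
    HasDerivAt (fun y => P.den y v) (P.px.den x v) x := by
  induction P with
  | fn g n => simpa [px] using hasDerivAt_const x _
  | X => exact hasDerivAt_id x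
  | U j => simpa [px] using hasDerivAt_const x (v j)
  | one => simpa [px] using hasDerivAt_const x (1 : ℝ)
  | smul a P ih => exact ih.const_mul a
  | add P Q ihP ihQ => exact ihP.add ihQ
  | mul P Q ihP ihQ => exact ihP.mul ihQ

theorem pderivJet_den (P : DiffPoly) (k : ℕ) (x : ℝ) (v : ℕ → ℝ) :
    pderivJet (P.den x) k v = (P.pd k).den x v :=
  (P.hasDerivAt_den k x v).deriv

theorem hasSum_pd (P : DiffPoly) (x : ℝ) (v : ℕ → ℝ) :
    HasSum (fun k => v (k + 1) * (P.pd k).den x v) (P.D.den x v - P.px.den x v) := by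
  induction P with
  | fn g n =>
    convert hasSum_single (f := fun k => v (k + 1) * ((fn g n).pd k).den x v) 0 ?_ using 1
    · simp [px, mul_comm]
    · intro k hk
      simp [hk]
  | X => simp [px, hasSum_zero]
  | U j =>
    convert hasSum_single (f := fun k => v (k + 1) * ((U j).pd k).den x v) j ?_ using 1
    · simp [px]
    · intro k hk
      simp [hk]
  | one => simp [px, hasSum_zero]
  | smul a P ih =>
    convert ih.mul_left a using 1
    · rfl
    · ext k
      change v (k + 1) * (a * _) = _
      ring
    · change a * _ - a * _ = _
      ring
  | add P Q ihP ihQ =>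
    convert ihP.add ihQ using 1
    · ext k
      change v (k + 1) * (_ + _) = _
      ring
    · change (_ + _) - (_ + _) = _
      ring
  | mul P Q ihP ihQ =>
    convert (ihP.mul_right (Q.den x v)).add (ihQ.mul_left (P.den x v)) using 1
    · rfl
    · ext k
      change v (k + 1) * (_ * _ + _ * _) = _
      ring
    · change (_ * _ + _ * _) - (_ * _ + _ * _) = _
      ring

theorem totalDerXT_eq {F : ℝ → ℝ → (ℕ → ℝ) → ℝ} {t : ℝ} {P : DiffPoly}
    (hF : ∀ x v, F x t v = P.den x v) (x : ℝ) (v : ℕ → ℝ) :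
    totalDerXT F x t v = P.D.den x v := by
  have hx : F x t = P.den x := funext (hF x)
  simp only [totalDerXT, hF, hx, pderivJet_den, (P.hasDerivAt_den_x x v).deriv,
    (P.hasSum_pd x v).tsum_eq]
  ring

theorem iterate_totalDerXT_eq {F : ℝ → ℝ → (ℕ → ℝ) → ℝ} {t : ℝ} {P : DiffPoly}
    (hF : ∀ x v, F x t v = P.den x v) (k : ℕ) (x : ℝ) (v : ℕ → ℝ) :
    totalDerXT^[k] F x t v = (D^[k] P).den x v := by
  induction k generalizing F P with
  | zero => exact hF x v
  | succ k ih =>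
    rw [Function.iterate_succ_apply, Function.iterate_succ_apply]
    exact ih (totalDerXT_eq hF)

theorem den_iterate_D_of_den_eq_zero {P : DiffPoly} (hP : ∀ x v, P.den x v = 0) (k : ℕ) (x : ℝ)
    (v : ℕ → ℝ) : (D^[k] P).den x v = 0 := by
  have h1 := iterate_totalDerXT_eq (F := fun x _ v => P.den x v) (t := 0) (fun _ _ => rfl) k x v
  have h2 := iterate_totalDerXT_eq (F := fun x _ v => P.den x v) (t := 0)
    (P := (0 : ℝ) • one) (fun x v => by simp [hP]) k x v
  rw [← h1, h2, iterate_D_smul, den_smul, zero_mul]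

theorem den_pd_of_ord_lt {P : DiffPoly} {k : ℕ} (hk : P.ord < k) (x : ℝ) (v : ℕ → ℝ) :
    (P.pd k).den x v = 0 := by
  induction P with
  | fn g n => simp [(Nat.zero_lt_of_lt hk).ne']
  | X => simp
  | U j => simp [(show k ≠ j from ne_of_gt hk)]
  | one => simp
  | smul a P ih => exact (congrArg (a * ·) (ih hk)).trans (mul_zero a)
  | add P Q ihP ihQ =>
    change (P.pd k).den x v + (Q.pd k).den x v = 0
    rw [ihP ((le_max_left _ _).trans_lt hk), ihQ ((le_max_right _ _).trans_lt hk), add_zero]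
  | mul P Q ihP ihQ =>
    change (P.pd k).den x v * _ + _ * (Q.pd k).den x v = 0
    rw [ihP ((le_max_left _ _).trans_lt hk), ihQ ((le_max_right _ _).trans_lt hk)]
    ring

theorem den_eulerSum (P : DiffPoly) (n : ℕ) (x : ℝ) (v : ℕ → ℝ) :
    (P.eulerSum n).den x v =
      ∑ k ∈ Finset.range (n + 1), (-1 : ℝ) ^ k * (D^[k] (P.pd k)).den x v := by
  induction n with
  | zero => simp [eulerSum]
  | succ n ih => rw [Finset.sum_range_succ, ← ih]; rfl

theorem hasSum_eulerSum {P : DiffPoly} {n : ℕ} (hn : P.ord ≤ n) (x : ℝ) (v : ℕ → ℝ) :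
    HasSum (fun k => (-1 : ℝ) ^ k * (D^[k] (P.pd k)).den x v) ((P.eulerSum n).den x v) := by
  rw [den_eulerSum]
  refine hasSum_sum_of_ne_finset_zero fun k hk => ?_
  rw [den_iterate_D_of_den_eq_zero (den_pd_of_ord_lt _), mul_zero]
  simp only [Finset.mem_range, not_lt] at hk
  omega

theorem den_euler_eq {P : DiffPoly} {n : ℕ} (hn : P.ord ≤ n) (x : ℝ) (v : ℕ → ℝ) :
    P.euler.den x v = (P.eulerSum n).den x v :=
  (hasSum_eulerSum le_rfl x v).unique (hasSum_eulerSum hn x v)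

theorem den_euler_add (P Q : DiffPoly) (x : ℝ) (v : ℕ → ℝ) :
    (P + Q).euler.den x v = P.euler.den x v + Q.euler.den x v := by
  refine (hasSum_eulerSum (P := P + Q) le_rfl x v).unique ?_
  convert (hasSum_eulerSum (P := P) le_rfl x v).add (hasSum_eulerSum (P := Q) le_rfl x v) using 1
  · ext k
    rw [pd_add, iterate_D_add, den_add, mul_add]
  · rfl

theorem den_euler_smul (a : ℝ) (P : DiffPoly) (x : ℝ) (v : ℕ → ℝ) :
    (a • P).euler.den x v = a * P.euler.den x v := by
  refine (hasSum_eulerSum (P := a • P) le_rfl x v).unique ?_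
  convert (hasSum_eulerSum (P := P) le_rfl x v).mul_left a using 1
  · rfl
  · ext k
    rw [pd_smul, iterate_D_smul, den_smul]
    ring
  · rfl

theorem EulerOpXT_eq {F : ℝ → ℝ → (ℕ → ℝ) → ℝ} {t : ℝ} {P : DiffPoly}
    (hF : ∀ x v, F x t v = P.den x v) (x : ℝ) (v : ℕ → ℝ) :
    EulerOpXT F x t v = P.euler.den x v := by
  rw [EulerOpXT, euler, ← (hasSum_eulerSum (P := P) le_rfl x v).tsum_eq]
  congr 1
  ext k
  congr 1
  refine iterate_totalDerXT_eq (fun y w => ?_) k x v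
  rw [show F y t = P.den y from funext (hF y), pderivJet_den]

theorem totalDer_eq {F : (ℕ → ℝ) → ℝ} {P : DiffPoly}
    (hF : ∀ x v, F v = P.den x v) (x : ℝ) (v : ℕ → ℝ) :
    totalDer F v = P.D.den x v := by
  rw [← totalDerXT_eq (F := fun _ _ v => F v) (t := 0) hF x v]
  simp [totalDer, totalDerXT]

theorem EulerOp_eq {F : (ℕ → ℝ) → ℝ} {P : DiffPoly}
    (hF : ∀ x v, F v = P.den x v) (x : ℝ) (v : ℕ → ℝ) :
    EulerOp F v = P.euler.den x v := by
  have key : ∀ (k : ℕ) (G : (ℕ → ℝ) → ℝ) (Q : DiffPoly), (∀ x v, G v = Q.den x v) →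
      ∀ x v, totalDer^[k] G v = (D^[k] Q).den x v := by
    intro k
    induction k with
    | zero => exact fun G Q h => h
    | succ k ih =>
      intro G Q h
      rw [Function.iterate_succ_apply, Function.iterate_succ_apply]
      exact ih _ _ (totalDer_eq h)
  rw [EulerOp, euler, ← (hasSum_eulerSum (P := P) le_rfl x v).tsum_eq]
  congr 1
  ext k
  congr 1
  refine key k _ _ (fun y w => ?_) x v
  rw [show F = P.den y from funext (hF y), pderivJet_den]

end DiffPoly

namespace DiffPoly

theorem den_euler_congr {P Q : DiffPoly} (hPQ : ∀ x v, P.den x v = Q.den x v) (x : ℝ) (v : ℕ → ℝ) :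
    P.euler.den x v = Q.euler.den x v := by
  rw [← EulerOpXT_eq (F := fun x _ v => P.den x v) (t := 0) (fun _ _ => rfl) x v]
  exact EulerOpXT_eq hPQ x v

theorem den_D_congr {P Q : DiffPoly} (hPQ : ∀ x v, P.den x v = Q.den x v) (x : ℝ) (v : ℕ → ℝ) :
    P.D.den x v = Q.D.den x v := by
  rw [← totalDerXT_eq (F := fun x _ v => P.den x v) (t := 0) (fun _ _ => rfl) x v]
  exact totalDerXT_eq hPQ x v

theorem derivs_mul_eq_one (c r : SmoothFun)
    (hr : ∀ w, iteratedDeriv 0 c.1 w * iteratedDeriv 1 r.1 w = 1) :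
    (∀ w, iteratedDeriv 1 c.1 w * iteratedDeriv 1 r.1 w +
      iteratedDeriv 0 c.1 w * iteratedDeriv 2 r.1 w = 0) ∧
    (∀ w, iteratedDeriv 2 c.1 w * iteratedDeriv 1 r.1 w +
      2 * iteratedDeriv 1 c.1 w * iteratedDeriv 2 r.1 w +
      iteratedDeriv 0 c.1 w * iteratedDeriv 3 r.1 w = 0) ∧
    ∀ w, iteratedDeriv 3 c.1 w * iteratedDeriv 1 r.1 w +
      3 * iteratedDeriv 2 c.1 w * iteratedDeriv 2 r.1 w +
      3 * iteratedDeriv 1 c.1 w * iteratedDeriv 3 r.1 w +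
      iteratedDeriv 0 c.1 w * iteratedDeriv 4 r.1 w = 0 := by
  have h2 : ∀ w, iteratedDeriv 1 c.1 w * iteratedDeriv 1 r.1 w +
      iteratedDeriv 0 c.1 w * iteratedDeriv 2 r.1 w = 0 := fun w => by
    have := (hasDerivAt_iteratedDeriv c 0 w).mul (hasDerivAt_iteratedDeriv r 1 w)
    rw [show iteratedDeriv 0 c.1 * iteratedDeriv 1 r.1 = fun _ => 1 from funext hr] at this
    exact this.unique (hasDerivAt_const w 1)
  have h3 : ∀ w, iteratedDeriv 2 c.1 w * iteratedDeriv 1 r.1 w +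
      2 * iteratedDeriv 1 c.1 w * iteratedDeriv 2 r.1 w +
      iteratedDeriv 0 c.1 w * iteratedDeriv 3 r.1 w = 0 := fun w => by
    have := ((hasDerivAt_iteratedDeriv c 1 w).mul (hasDerivAt_iteratedDeriv r 1 w)).add
      ((hasDerivAt_iteratedDeriv c 0 w).mul (hasDerivAt_iteratedDeriv r 2 w))
    rw [show iteratedDeriv 1 c.1 * iteratedDeriv 1 r.1 + iteratedDeriv 0 c.1 * iteratedDeriv 2 r.1 =
      fun _ => 0 from funext h2] at this
    linear_combination this.unique (hasDerivAt_const w 0)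
  refine ⟨h2, h3, fun w => ?_⟩
  have := (((hasDerivAt_iteratedDeriv c 2 w).mul (hasDerivAt_iteratedDeriv r 1 w)).add
    (((hasDerivAt_iteratedDeriv c 1 w).const_mul 2).mul (hasDerivAt_iteratedDeriv r 2 w))).add
    ((hasDerivAt_iteratedDeriv c 0 w).mul (hasDerivAt_iteratedDeriv r 3 w))
  linear_combination this.unique
    ((hasDerivAt_const w 0).congr_of_eventuallyEq (Filter.Eventually.of_forall h3))

theorem derivs_eq_mul (h r q : SmoothFun)
    (hq : ∀ w, iteratedDeriv 1 q.1 w = iteratedDeriv 2 h.1 w * iteratedDeriv 1 r.1 w) :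
    (∀ w, iteratedDeriv 3 q.1 w = iteratedDeriv 4 h.1 w * iteratedDeriv 1 r.1 w +
      2 * iteratedDeriv 3 h.1 w * iteratedDeriv 2 r.1 w +
      iteratedDeriv 2 h.1 w * iteratedDeriv 3 r.1 w) ∧
    ∀ w, iteratedDeriv 4 q.1 w = iteratedDeriv 5 h.1 w * iteratedDeriv 1 r.1 w +
      3 * iteratedDeriv 4 h.1 w * iteratedDeriv 2 r.1 w +
      3 * iteratedDeriv 3 h.1 w * iteratedDeriv 3 r.1 w +
      iteratedDeriv 2 h.1 w * iteratedDeriv 4 r.1 w := by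
  have h2 : ∀ w, iteratedDeriv 2 q.1 w = iteratedDeriv 3 h.1 w * iteratedDeriv 1 r.1 w +
      iteratedDeriv 2 h.1 w * iteratedDeriv 2 r.1 w := fun w => by
    have := (hasDerivAt_iteratedDeriv h 2 w).mul (hasDerivAt_iteratedDeriv r 1 w)
    rw [show iteratedDeriv 2 h.1 * iteratedDeriv 1 r.1 = iteratedDeriv 1 q.1 from
      (funext hq).symm] at this
    exact (hasDerivAt_iteratedDeriv q 1 w).unique this
  have h3 : ∀ w, iteratedDeriv 3 q.1 w = iteratedDeriv 4 h.1 w * iteratedDeriv 1 r.1 w +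
      2 * iteratedDeriv 3 h.1 w * iteratedDeriv 2 r.1 w +
      iteratedDeriv 2 h.1 w * iteratedDeriv 3 r.1 w := fun w => by
    have := ((hasDerivAt_iteratedDeriv h 3 w).mul (hasDerivAt_iteratedDeriv r 1 w)).add
      ((hasDerivAt_iteratedDeriv h 2 w).mul (hasDerivAt_iteratedDeriv r 2 w))
    rw [show iteratedDeriv 3 h.1 * iteratedDeriv 1 r.1 + iteratedDeriv 2 h.1 * iteratedDeriv 2 r.1 =
      iteratedDeriv 2 q.1 from (funext h2).symm] at this
    linear_combination (hasDerivAt_iteratedDeriv q 2 w).unique this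
  refine ⟨h3, fun w => ?_⟩
  have := (((hasDerivAt_iteratedDeriv h 4 w).mul (hasDerivAt_iteratedDeriv r 1 w)).add
    (((hasDerivAt_iteratedDeriv h 3 w).const_mul 2).mul (hasDerivAt_iteratedDeriv r 2 w))).add
    ((hasDerivAt_iteratedDeriv h 2 w).mul (hasDerivAt_iteratedDeriv r 3 w))
  linear_combination (hasDerivAt_iteratedDeriv q 3 w).unique
    (this.congr_of_eventuallyEq (Filter.Eventually.of_forall h3))

/-- The density `c g''' u_x²`. -/
def quad (c g : SmoothFun) : DiffPoly := fn c 0 * fn g 3 * (U 1 * U 1)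

/-- The variational derivative of `-(1/2) c g''' u_x²`. -/
def quadVar (c g : SmoothFun) : DiffPoly :=
  (1 / 2 : ℝ) • ((fn c 1 * fn g 3 + fn c 0 * fn g 4) * (U 1 * U 1)) + fn c 0 * fn g 3 * U 2

theorem den_euler_fn (g : SmoothFun) (x : ℝ) (v : ℕ → ℝ) :
    (fn g 0).euler.den x v = (fn g 1).den x v := rfl

theorem den_euler_X_mul_fn (g : SmoothFun) (x : ℝ) (v : ℕ → ℝ) :
    (X * fn g 0).euler.den x v = (X * fn g 1).den x v := by
  rw [den_euler_eq (n := 0) (by simp)]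
  simp [eulerSum]

theorem den_euler_quad (c g : SmoothFun) (x : ℝ) (v : ℕ → ℝ) :
    ((-1 / 2 : ℝ) • quad c g).euler.den x v = (quadVar c g).den x v := by
  rw [den_euler_eq (n := 1) (by simp [quad])]
  simp [eulerSum, quad, quadVar]
  ring

theorem den_euler_X_mul_quad (c g : SmoothFun) (x : ℝ) (v : ℕ → ℝ) :
    (X * ((-1 / 2 : ℝ) • quad c g)).euler.den x v =
      (X * quadVar c g + fn c 0 * fn g 3 * U 1).den x v := by
  rw [den_euler_eq (n := 1) (by simp [quad])]
  simp [eulerSum, quad, quadVar]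
  ring

theorem den_euler_transport (g h : SmoothFun) (x : ℝ) (v : ℕ → ℝ) :
    (fn g 1 * (fn h 2 * U 1)).euler.den x v = 0 := by
  rw [den_euler_eq (n := 1) (by simp)]
  simp [eulerSum]
  ring

theorem den_euler_X_mul_transport (g h : SmoothFun) (x : ℝ) (v : ℕ → ℝ) :
    (X * (fn g 1 * (fn h 2 * U 1))).euler.den x v = -(fn g 1 * fn h 2).den x v := by
  rw [den_euler_eq (n := 1) (by simp)]
  simp [eulerSum]
  ring

/-- First-order commutation of the Hamiltonians generated by `g` and `h`. -/
theorem den_euler_commute (c g h : SmoothFun) (x : ℝ) (v : ℕ → ℝ) :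
    (fn g 1 * (quadVar c h).D + quadVar c g * (fn h 2 * U 1)).euler.den x v = 0 := by
  rw [den_euler_eq (n := 3) (by simp [quadVar])]
  simp [eulerSum, quadVar]
  ring

/-- The string identity at order `ε²` for `c r' = 1` and `q' = h'' r'`. -/
theorem den_euler_X_mul_commute (c h r q : SmoothFun)
    (hr : ∀ w, iteratedDeriv 0 c.1 w * iteratedDeriv 1 r.1 w = 1)
    (hq : ∀ w, iteratedDeriv 1 q.1 w = iteratedDeriv 2 h.1 w * iteratedDeriv 1 r.1 w)
    (x : ℝ) (v : ℕ → ℝ) :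
    (X * (fn r 1 * (quadVar c h).D) +
      (X * quadVar c r + fn c 0 * fn r 3 * U 1) * (fn h 2 * U 1)).euler.den x v =
      -(quadVar c q).den x v := by
  obtain ⟨hr2, hr3, -⟩ := derivs_mul_eq_one c r hr
  obtain ⟨hq3, hq4⟩ := derivs_eq_mul h r q hq
  rw [den_euler_eq (n := 3) (by simp [quadVar])]
  simp [eulerSum, quadVar] at hr2 hr3 hq3 hq4 ⊢
  linear_combination
    (-(1 / 2) * iteratedDeriv 4 h.1 (v 0) * v 1 ^ 2 - iteratedDeriv 3 h.1 (v 0) * v 2) * hr2 (v 0)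
      - 1 / 2 * iteratedDeriv 3 h.1 (v 0) * v 1 ^ 2 * hr3 (v 0)
      + (1 / 2 * deriv c.1 (v 0) * v 1 ^ 2 + c.1 (v 0) * v 2) * hq3 (v 0)
      + 1 / 2 * c.1 (v 0) * v 1 ^ 2 * hq4 (v 0)

end DiffPoly

theorem iteratedDeriv_even_poly_eq_zero (a b d : ℝ) {j : ℕ} (hj : j < 4) :
    iteratedDeriv j (fun ε : ℝ => a * ε ^ 4 + b * ε ^ 6 + d * ε ^ 8) 0 = 0 := by
  rw [iteratedDeriv_fun_add (by fun_prop) (by fun_prop),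
    iteratedDeriv_fun_add (by fun_prop) (by fun_prop)]
  simp only [iteratedDeriv_const_mul_field, iteratedDeriv_pow]
  rw [zero_pow (by omega), zero_pow (by omega), zero_pow (by omega)]
  simp

open DiffPoly in
theorem EulerOpXT_eq_coeff {S : ℝ → ℝ → ℝ → (ℕ → ℝ) → ℝ} {A₀ A₂ A₄ B₀ B₂ B₄ : DiffPoly}
    (hS : ∀ ε x t v, S ε x t v = ((A₀ + t • B₀) + ε ^ 2 • (A₂ + t • B₂) +
      ε ^ 4 • (A₄ + t • B₄)).den x v) (ε t x : ℝ) (v : ℕ → ℝ) :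
    EulerOpXT (S ε) x t v = ((A₀ + t • B₀).euler + ε ^ 2 • (A₂ + t • B₂).euler +
      ε ^ 4 • (A₄ + t • B₄).euler).den x v := by
  rw [EulerOpXT_eq (hS ε · t ·)]
  simp only [den_euler_add, den_euler_smul, den_add, den_smul]

open DiffPoly in
theorem conservedUpTo_four_of_coeff {c p s h : ℝ → ℝ} {S : ℝ → ℝ → ℝ → (ℕ → ℝ) → ℝ}
    {A₀ A₂ A₄ B₀ B₂ B₄ H₀ H₂ H₄ : DiffPoly}
    (hS : ∀ ε x t v, S ε x t v = ((A₀ + t • B₀) + ε ^ 2 • (A₂ + t • B₂) +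
      ε ^ 4 • (A₄ + t • B₄)).den x v)
    (hH : ∀ ε x v, Dop c p s h ε v = (H₀ + ε ^ 2 • H₂ + ε ^ 4 • H₄).den x v)
    (h₀ : ∀ (t x : ℝ) (v : ℕ → ℝ), B₀.euler.den x v +
      ((A₀ + t • B₀).euler * H₀.euler.D).euler.den x v = 0)
    (h₂ : ∀ (t x : ℝ) (v : ℕ → ℝ), B₂.euler.den x v +
      ((A₀ + t • B₀).euler * H₂.euler.D + (A₂ + t • B₂).euler * H₀.euler.D).euler.den x v = 0) :
    ConservedUpTo c p s h S 4 := by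
  intro x t v j hj
  have hE := EulerOpXT_eq_coeff hS
  have hK : ∀ (ε x : ℝ) (v : ℕ → ℝ), totalDer (EulerOp (Dop c p s h ε)) v =
      (H₀.euler.D + ε ^ 2 • H₂.euler.D + ε ^ 4 • H₄.euler.D).den x v := fun ε x v => by
    rw [totalDer_eq (P := H₀.euler + ε ^ 2 • H₂.euler + ε ^ 4 • H₄.euler)
      (fun x v => ?_) x v]
    · rfl
    · rw [EulerOp_eq (hH ε) x v]
      simp only [den_euler_add, den_euler_smul, den_add, den_smul]
  have hT : ∀ ε : ℝ, deriv (fun τ => EulerOpXT (S ε) x τ v) t =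
      B₀.euler.den x v + ε ^ 2 * B₂.euler.den x v + ε ^ 4 * B₄.euler.den x v := fun ε => by
    have : (fun τ => EulerOpXT (S ε) x τ v) = fun τ =>
        (A₀.euler.den x v + ε ^ 2 * A₂.euler.den x v + ε ^ 4 * A₄.euler.den x v) + τ *
        (B₀.euler.den x v + ε ^ 2 * B₂.euler.den x v + ε ^ 4 * B₄.euler.den x v) := by
      ext τ
      rw [hE]
      simp only [den_euler_add, den_euler_smul, den_add, den_smul]
      ring
    rw [this]
    simp
  have hP : ∀ ε : ℝ, EulerOpXT (fun x' t' w =>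
      EulerOpXT (S ε) x' t' w * totalDer (EulerOp (Dop c p s h ε)) w) x t v =
      (((A₀ + t • B₀).euler * H₀.euler.D) +
        ε ^ 2 • ((A₀ + t • B₀).euler * H₂.euler.D + (A₂ + t • B₂).euler * H₀.euler.D) +
        ε ^ 4 • ((A₀ + t • B₀).euler * H₄.euler.D + (A₂ + t • B₂).euler * H₂.euler.D +
          (A₄ + t • B₄).euler * H₀.euler.D) +
        ε ^ 6 • ((A₂ + t • B₂).euler * H₄.euler.D + (A₄ + t • B₄).euler * H₂.euler.D) +
        ε ^ 8 • ((A₄ + t • B₄).euler * H₄.euler.D)).euler.den x v := fun ε => by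
    refine EulerOpXT_eq (fun x v => ?_) x v
    rw [hE, hK ε x v]
    simp only [den_add, den_smul, den_mul]
    ring
  refine Eq.trans (congrArg (iteratedDeriv j · 0) (funext fun ε => ?_))
    (iteratedDeriv_even_poly_eq_zero
    (B₄.euler.den x v + ((A₀ + t • B₀).euler * H₄.euler.D + (A₂ + t • B₂).euler * H₂.euler.D +
          (A₄ + t • B₄).euler * H₀.euler.D).euler.den x v)
    (((A₂ + t • B₂).euler * H₄.euler.D + (A₄ + t • B₄).euler * H₂.euler.D).euler.den x v)
    (((A₄ + t • B₄).euler * H₄.euler.D).euler.den x v) hj)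
  rw [consDefect, hT, hP]
  simp only [fun (P : DiffPoly) (a : ℝ) (Q : DiffPoly) => den_euler_add P (a • Q), den_euler_smul]
  linear_combination h₀ t x v + ε ^ 2 * h₂ t x v

namespace DiffPoly

/-- The quartic correction in the `D`-operator applied to `g`. -/
def quartic (c p s g : SmoothFun) : DiffPoly :=
  (fn p 0 * fn g 3 + (3 / 10 : ℝ) • (fn c 0 * fn c 0 * fn g 4)) * (U 2 * U 2) +
    (fn s 0 * fn g 3 + (-1 / 8 : ℝ) • (fn c 0 * fn c 2 * fn g 4) +
      (-1 / 8 : ℝ) • (fn c 0 * fn c 1 * fn g 5) + (-1 / 24 : ℝ) • (fn c 0 * fn c 0 * fn g 6) +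
      (-1 / 6 : ℝ) • (fn p 1 * fn g 4) + (-1 / 6 : ℝ) • (fn p 0 * fn g 5)) *
      (U 1 * U 1 * U 1 * U 1)

theorem Dop_eq_den (c p s g : SmoothFun) (ε x : ℝ) (v : ℕ → ℝ) :
    Dop c.1 p.1 s.1 g.1 ε v =
      (fn g 0 + ε ^ 2 • ((-1 / 2 : ℝ) • quad c g) + ε ^ 4 • quartic c p s g).den x v := by
  simp [Dop, cCoef, pCoef, sCoef, quad, quartic]
  ring

theorem SfFam_eq_den (c p s r q e f f₁ f₂ : SmoothFun) (ε x t : ℝ) (v : ℕ → ℝ) :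
    SfFam c.1 p.1 s.1 r.1 q.1 e.1 f.1 f₁.1 f₂.1 ε x t v =
      ((X * fn r 0 + (-1 : ℝ) • fn f 0 + t • fn q 0) +
        ε ^ 2 • (X * ((-1 / 2 : ℝ) • quad c r) +
          (-1 : ℝ) • ((-1 / 2 : ℝ) • quad c f + fn f₁ 0) + t • ((-1 / 2 : ℝ) • quad c q)) +
        ε ^ 4 • (X * quartic c p s r + fn e 0 * (U 1 * U 1 * U 1) +
          (-1 : ℝ) • (quartic c p s f + (-1 / 2 : ℝ) • quad c f₁ + fn f₂ 0) +
          t • quartic c p s q)).den x v := by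
  simp only [SfFam, Dop_eq_den _ _ _ _ _ x, den_add, den_smul, den_mul, den_X, den_fn, den_U,
    iteratedDeriv_zero, cCoef, quad]
  ring

end DiffPoly

open DiffPoly in
theorem conservedUpTo_SfFam (c p s h r q e f f₁ f₂ : SmoothFun)
    (hr : ∀ w, iteratedDeriv 0 c.1 w * iteratedDeriv 1 r.1 w = 1)
    (hq : ∀ w, iteratedDeriv 1 q.1 w = iteratedDeriv 2 h.1 w * iteratedDeriv 1 r.1 w) :
    ConservedUpTo c.1 p.1 s.1 h.1 (SfFam c.1 p.1 s.1 r.1 q.1 e.1 f.1 f₁.1 f₂.1) 4 := by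
  refine conservedUpTo_four_of_coeff (SfFam_eq_den c p s r q e f f₁ f₂) (Dop_eq_den c p s h)
    (fun t x v => ?_) (fun t x v => ?_)
  · rw [den_euler_congr (P := _ * D _) (Q := X * (fn r 1 * (fn h 2 * U 1)) +
      t • (fn q 1 * (fn h 2 * U 1)) +
      (-1 : ℝ) • (fn f 1 * (fn h 2 * U 1)))]
    · simp only [den_euler_add, den_euler_smul, den_euler_transport, den_euler_X_mul_transport,
        den_euler_fn, den_mul, den_fn, hq]
      ring
    · intro x v
      simp only [den_mul, den_add, den_smul, den_euler_add, den_euler_smul, den_euler_X_mul_fn,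
        den_euler_fn, den_D_congr (den_euler_fn h), D_fn]
      ring
  · rw [den_euler_congr (P := _ * D _ + _ * D _) (Q := (X * (fn r 1 * (quadVar c h).D) +
        (X * quadVar c r + fn c 0 * fn r 3 * U 1) * (fn h 2 * U 1)) +
      t • (fn q 1 * (quadVar c h).D + quadVar c q * (fn h 2 * U 1)) +
      (-1 : ℝ) • (fn f 1 * (quadVar c h).D + quadVar c f * (fn h 2 * U 1)) +
      (-1 : ℝ) • (fn f₁ 1 * (fn h 2 * U 1)))]
    · rw [den_euler_quad, den_euler_add, den_euler_add, den_euler_add, den_euler_smul,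
        den_euler_smul, den_euler_smul, den_euler_X_mul_commute c h r q hr hq, den_euler_commute,
        den_euler_commute, den_euler_transport]
      ring
    · intro x v
      rw [den_add, den_mul, den_mul, den_D_congr (den_euler_fn h), den_D_congr (den_euler_quad c h)]
      simp only [den_mul, den_add, den_smul (_ + _), den_smul (_ * _),
        den_euler_add, den_euler_smul _ (_ + _), den_euler_smul t, den_euler_smul _ (fn _ _),
        den_euler_X_mul_fn, den_euler_quad, den_euler_X_mul_quad, den_euler_fn, D_fn]
      ring

theorem iteratedDeriv_two_div {a a' a'' b b' b'' : ℝ → ℝ} (ha : ∀ y, HasDerivAt a (a' y) y)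
    (ha' : ∀ y, HasDerivAt a' (a'' y) y) (hb : ∀ y, HasDerivAt b (b' y) y)
    (hb' : ∀ y, HasDerivAt b' (b'' y) y) {w : ℝ} (hw : b w ≠ 0) :
    iteratedDeriv 2 (fun z => a z / b z) w =
      a'' w / b w - 2 * a' w * b' w / b w ^ 2 - a w * b'' w / b w ^ 2 +
        2 * a w * b' w ^ 2 / b w ^ 3 := by
  have hne : ∀ᶠ y in nhds w, b y ≠ 0 := (hb w).continuousAt.eventually_ne hw
  have hd : deriv (fun z => a z / b z) =ᶠ[nhds w]
      fun y => (a' y * b y - a y * b' y) / b y ^ 2 :=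
    hne.mono fun y hy => ((ha y).div (hb y) hy).deriv
  rw [iteratedDeriv_succ, iteratedDeriv_one, hd.deriv_eq]
  refine (((((ha' w).mul (hb w)).sub ((ha w).mul (hb' w))).div ((hb w).pow 2)
    (pow_ne_zero 2 hw)).deriv).trans ?_
  simp only [Pi.mul_apply, Pi.sub_apply, Pi.pow_apply]
  field_simp
  ring

/-- Derivatives of a local inverse. -/
theorem derivs_of_local_inverse {m m' m'' : ℝ → ℝ} (φ : SmoothFun)
    (hm : ∀ y, HasDerivAt m (m' y) y) (hm' : ∀ y, HasDerivAt m' (m'' y) y) {x : ℝ}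
    (hφ : ∀ᶠ y in nhds x, m (φ.1 y) = y) :
    m' (φ.1 x) * iteratedDeriv 1 φ.1 x = 1 ∧
      m'' (φ.1 x) * iteratedDeriv 1 φ.1 x ^ 2 + m' (φ.1 x) * iteratedDeriv 2 φ.1 x = 0 := by
  have hd : ∀ y, HasDerivAt φ.1 (iteratedDeriv 1 φ.1 y) y := fun y => by
    simpa only [iteratedDeriv_zero] using DiffPoly.hasDerivAt_iteratedDeriv φ 0 y
  have h1 : ∀ᶠ y in nhds x, m' (φ.1 y) * iteratedDeriv 1 φ.1 y = 1 :=
    hφ.eventually_nhds.mono fun y hy =>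
      ((hm _).comp y (hd y)).unique ((hasDerivAt_id y).congr_of_eventuallyEq hy)
  refine ⟨h1.self_of_nhds, ?_⟩
  have h2 := (((hm' _).comp x (hd x)).mul (DiffPoly.hasDerivAt_iteratedDeriv φ 1 x)).unique
    ((hasDerivAt_const x (1 : ℝ)).congr_of_eventuallyEq h1)
  simp only [Function.comp_apply] at h2
  linear_combination h2

/-- The algebraic identity behind the vanishing of the `ε²`-coefficient of the string equation. -/
theorem string_coeff_two_eq_zero {c₀ c₁ c₂ c₃ f₁ f₂ f₃ f₄ r₁ r₂ r₃ r₄ φ₁ φ₂ x : ℝ} (hc : c₀ ≠ 0)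
    (hr₁ : c₀ * r₁ = 1) (hr₂ : c₁ * r₁ + c₀ * r₂ = 0) (hr₃ : c₂ * r₁ + 2 * c₁ * r₂ + c₀ * r₃ = 0)
    (hr₄ : c₃ * r₁ + 3 * c₂ * r₂ + 3 * c₁ * r₃ + c₀ * r₄ = 0) (hx : c₀ * f₁ = x)
    (hφ₁ : (c₁ * f₁ + c₀ * f₂) * φ₁ = 1)
    (hφ₂ : (c₂ * f₁ + 2 * c₁ * f₂ + c₀ * f₃) * φ₁ ^ 2 + (c₁ * f₁ + c₀ * f₂) * φ₂ = 0) :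
    x * (1 / 2 * ((c₁ * r₃ + c₀ * r₄) * φ₁ ^ 2) + c₀ * r₃ * φ₂) + c₀ * r₃ * φ₁ -
      (1 / 2 * ((c₁ * f₃ + c₀ * f₄) * φ₁ ^ 2) + c₀ * f₃ * φ₂) -
      1 / (2 * c₀) * (c₂ / (c₁ * f₁ + c₀ * f₂) -
        2 * c₁ * (c₂ * f₁ + 2 * c₁ * f₂ + c₀ * f₃) / (c₁ * f₁ + c₀ * f₂) ^ 2 -
        c₀ * (c₃ * f₁ + 3 * c₂ * f₂ + 3 * c₁ * f₃ + c₀ * f₄) / (c₁ * f₁ + c₀ * f₂) ^ 2 +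
        2 * c₀ * (c₂ * f₁ + 2 * c₁ * f₂ + c₀ * f₃) ^ 2 / (c₁ * f₁ + c₀ * f₂) ^ 3) = 0 := by
  have hm : c₁ * f₁ + c₀ * f₂ ≠ 0 := left_ne_zero_of_mul_eq_one hφ₁
  obtain ⟨m, hmm⟩ : ∃ m, m = c₁ * f₁ + c₀ * f₂ := ⟨_, rfl⟩
  rw [← hmm] at hφ₁ hφ₂ hm ⊢
  obtain rfl : r₁ = 1 / c₀ := by field_simp; linear_combination hr₁
  obtain rfl : r₂ = -c₁ / c₀ ^ 2 := by field_simp at hr₂ ⊢; linear_combination hr₂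
  obtain rfl : r₃ = (2 * c₁ ^ 2 - c₀ * c₂) / c₀ ^ 3 := by
    field_simp at hr₃ ⊢; linear_combination hr₃
  obtain rfl : r₄ = (6 * c₀ * c₁ * c₂ - 6 * c₁ ^ 3 - c₀ ^ 2 * c₃) / c₀ ^ 4 := by
    field_simp at hr₄ ⊢; linear_combination hr₄
  obtain rfl : f₂ = (m - c₁ * f₁) / c₀ := by field_simp; linear_combination -hmm
  obtain rfl : φ₁ = 1 / m := by field_simp; linear_combination hφ₁
  obtain rfl : φ₂ = -(c₂ * f₁ + 2 * c₁ * ((m - c₁ * f₁) / c₀) + c₀ * f₃) / m ^ 3 := by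
    field_simp at hφ₂ ⊢; linear_combination hφ₂
  subst hx
  field_simp
  ring

open DiffPoly in
theorem iteratedDeriv_EulerOpXT_SfFam (c p s r q e f f₁ f₂ φ : SmoothFun) (hc0 : ∀ w, c.1 w ≠ 0)
    (hr : ∀ w, iteratedDeriv 0 c.1 w * iteratedDeriv 1 r.1 w = 1) {x : ℝ}
    (hφ : ∀ᶠ y in nhds x, c.1 (φ.1 y) * deriv f.1 (φ.1 y) = y)
    (hf₁ : deriv f₁.1 (φ.1 x) = 1 / (2 * c.1 (φ.1 x)) *
      iteratedDeriv 2 (fun z => c.1 z / deriv (fun y => c.1 y * deriv f.1 y) z) (φ.1 x))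
    {j : ℕ} (hj : j < 4) :
    iteratedDeriv j (fun ε => EulerOpXT (SfFam c.1 p.1 s.1 r.1 q.1 e.1 f.1 f₁.1 f₂.1 ε) x 0
      (jetsAt φ.1 x)) 0 = 0 := by
  have hm : ∀ y, HasDerivAt (fun y => c.1 y * deriv f.1 y)
      (iteratedDeriv 1 c.1 y * iteratedDeriv 1 f.1 y +
        iteratedDeriv 0 c.1 y * iteratedDeriv 2 f.1 y) y := fun y => by
    simpa using! (hasDerivAt_iteratedDeriv c 0 y).mul (hasDerivAt_iteratedDeriv f 1 y)
  have hm' : ∀ y, HasDerivAt (fun y => iteratedDeriv 1 c.1 y * iteratedDeriv 1 f.1 y +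
        iteratedDeriv 0 c.1 y * iteratedDeriv 2 f.1 y)
      (iteratedDeriv 2 c.1 y * iteratedDeriv 1 f.1 y +
        2 * iteratedDeriv 1 c.1 y * iteratedDeriv 2 f.1 y +
        iteratedDeriv 0 c.1 y * iteratedDeriv 3 f.1 y) y := fun y => by
    refine (((hasDerivAt_iteratedDeriv c 1 y).mul (hasDerivAt_iteratedDeriv f 1 y)).add
      ((hasDerivAt_iteratedDeriv c 0 y).mul (hasDerivAt_iteratedDeriv f 2 y))).congr_deriv ?_
    ring
  have hm'' : ∀ y, HasDerivAt (fun y => iteratedDeriv 2 c.1 y * iteratedDeriv 1 f.1 y +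
        2 * iteratedDeriv 1 c.1 y * iteratedDeriv 2 f.1 y +
        iteratedDeriv 0 c.1 y * iteratedDeriv 3 f.1 y)
      (iteratedDeriv 3 c.1 y * iteratedDeriv 1 f.1 y +
        3 * iteratedDeriv 2 c.1 y * iteratedDeriv 2 f.1 y +
        3 * iteratedDeriv 1 c.1 y * iteratedDeriv 3 f.1 y +
        iteratedDeriv 0 c.1 y * iteratedDeriv 4 f.1 y) y := fun y => by
    refine ((((hasDerivAt_iteratedDeriv c 2 y).mul (hasDerivAt_iteratedDeriv f 1 y)).add
      (((hasDerivAt_iteratedDeriv c 1 y).const_mul 2).mul (hasDerivAt_iteratedDeriv f 2 y))).add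
      ((hasDerivAt_iteratedDeriv c 0 y).mul (hasDerivAt_iteratedDeriv f 3 y))).congr_deriv ?_
    ring
  obtain ⟨hφ1, hφ2⟩ := derivs_of_local_inverse φ hm hm' hφ
  have hx : iteratedDeriv 0 c.1 (φ.1 x) * iteratedDeriv 1 f.1 (φ.1 x) = x := by
    simpa using hφ.self_of_nhds
  obtain ⟨hr2, hr3, hr4⟩ := derivs_mul_eq_one c r hr
  have hc := hc0 (φ.1 x)
  rw [show deriv (fun y => c.1 y * deriv f.1 y) = _ from funext fun y => (hm y).deriv,
    iteratedDeriv_two_div (a := c.1) (hasDerivAt_iteratedDeriv c 0) (hasDerivAt_iteratedDeriv c 1)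
      hm' hm'' (left_ne_zero_of_mul_eq_one hφ1)] at hf₁
  have hW₀ : (X * fn r 0 + (-1 : ℝ) • fn f 0).euler.den x (jetsAt φ.1 x) = 0 := by
    rw [den_euler_add, den_euler_smul, den_euler_X_mul_fn, den_euler_fn]
    simp only [den_mul, den_X, den_fn, jetsAt, iteratedDeriv_zero] at hx hr ⊢
    linear_combination iteratedDeriv 1 f.1 (φ.1 x) * hr (φ.1 x) -
      iteratedDeriv 1 r.1 (φ.1 x) * hx
  have hW₂ : (X * ((-1 / 2 : ℝ) • quad c r) +
      (-1 : ℝ) • ((-1 / 2 : ℝ) • quad c f + fn f₁ 0)).euler.den x (jetsAt φ.1 x) = 0 := by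
    rw [den_euler_add, den_euler_smul, den_euler_add, den_euler_X_mul_quad, den_euler_quad,
      den_euler_fn]
    simp only [den_mul, den_X, den_fn, den_U, den_add, den_smul, quadVar, jetsAt,
      iteratedDeriv_zero] at hx hφ1 hφ2 hf₁ hr hr2 hr3 hr4 ⊢
    rw [iteratedDeriv_one (f := f₁.1), hf₁]
    linear_combination string_coeff_two_eq_zero (f₄ := iteratedDeriv 4 f.1 (φ.1 x)) hc
      (hr (φ.1 x)) (hr2 (φ.1 x)) (hr3 (φ.1 x)) (hr4 (φ.1 x)) hx hφ1 hφ2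
  refine Eq.trans (congrArg (iteratedDeriv j · 0) (funext fun ε => ?_))
    (iteratedDeriv_even_poly_eq_zero ((X * quartic c p s r + fn e 0 * (U 1 * U 1 * U 1) +
      (-1 : ℝ) • (quartic c p s f + (-1 / 2 : ℝ) • quad c f₁ + fn f₂ 0)).euler.den x
        (jetsAt φ.1 x)) 0 0 hj)
  rw [EulerOpXT_eq_coeff (SfFam_eq_den c p s r q e f f₁ f₂)]
  simp only [den_add, den_smul, fun (P Q : DiffPoly) => den_euler_add P ((0 : ℝ) • Q),
    den_euler_smul 0, hW₀, hW₂]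
  ring

/-- Proposition 2.4: (a) for arbitrary smooth `f, f₁, f₂` (and `e`), the
functional `S_f = S₀ − H^ε_f` is conserved up to `O(ε⁴)` along (eveq); (b) if `f` is a
local inverse of the initial data via `c(φ(x))·f'(φ(x)) = x` and `f₁` satisfies the
explicit ODE, then the variational derivative of `S_f` at `t = 0`, `u = φ(x)` is
`O(ε⁴)`: its `ε⁰`- and `ε²`-coefficients vanish on `(x₋, x₊)`. -/
theorem string_functional_eps2
    (h c p s : ℝ → ℝ)
    (hh : ContDiff ℝ (⊤ : ℕ∞) h) (hc : ContDiff ℝ (⊤ : ℕ∞) c)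
    (hp : ContDiff ℝ (⊤ : ℕ∞) p) (hs : ContDiff ℝ (⊤ : ℕ∞) s)
    (hc0 : ∀ w, c w ≠ 0)
    (hh3 : ∃ w, iteratedDeriv 3 h w ≠ 0)
    (r q e : ℝ → ℝ)
    (hr : ContDiff ℝ (⊤ : ℕ∞) r) (hq : ContDiff ℝ (⊤ : ℕ∞) q)
    (he : ContDiff ℝ (⊤ : ℕ∞) e)
    (hr' : ∀ w, deriv r w = 1 / c w)
    (hq' : ∀ w, deriv q w = iteratedDeriv 2 h w / c w) :
    (∀ f f₁ f₂ : ℝ → ℝ, ContDiff ℝ (⊤ : ℕ∞) f → ContDiff ℝ (⊤ : ℕ∞) f₁ →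
        ContDiff ℝ (⊤ : ℕ∞) f₂ →
        ConservedUpTo c p s h (SfFam c p s r q e f f₁ f₂) 4)
    ∧ (∀ f f₁ f₂ : ℝ → ℝ, ContDiff ℝ (⊤ : ℕ∞) f → ContDiff ℝ (⊤ : ℕ∞) f₁ →
        ContDiff ℝ (⊤ : ℕ∞) f₂ →
        ∀ (φ : ℝ → ℝ) (xm xp : ℝ), ContDiff ℝ (⊤ : ℕ∞) φ → xm < xp →
        (StrictMonoOn φ (Set.Ioo xm xp) ∨ StrictAntiOn φ (Set.Ioo xm xp)) →
        (∀ x ∈ Set.Ioo xm xp, c (φ x) ≠ 0) →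
        (∀ x ∈ Set.Ioo xm xp, c (φ x) * deriv f (φ x) = x) →
        (∀ w : ℝ, deriv f₁ w = 1 / (2 * c w)
          * iteratedDeriv 2 (fun z => c z / deriv (fun y => c y * deriv f y) z) w) →
        ∀ x ∈ Set.Ioo xm xp, ∀ j < 4,
          iteratedDeriv j (fun ε =>
            EulerOpXT (SfFam c p s r q e f f₁ f₂ ε) x 0 (jetsAt φ x)) 0 = 0) := by
  have hr1 : ∀ w, iteratedDeriv 0 c w * iteratedDeriv 1 r w = 1 := fun w => by
    rw [iteratedDeriv_zero, iteratedDeriv_one, hr' w, mul_one_div_cancel (hc0 w)]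
  refine ⟨fun f f₁ f₂ hf hf₁ hf₂ => ?_,
    fun f f₁ f₂ hf hf₁ hf₂ φ xm xp hφ _ _ _ hfφ hf₁' x hx j hj => ?_⟩
  · refine conservedUpTo_SfFam ⟨c, hc⟩ ⟨p, hp⟩ ⟨s, hs⟩ ⟨h, hh⟩ ⟨r, hr⟩ ⟨q, hq⟩ ⟨e, he⟩ ⟨f, hf⟩
      ⟨f₁, hf₁⟩ ⟨f₂, hf₂⟩ hr1 fun w => ?_
    rw [iteratedDeriv_one, iteratedDeriv_one, hq' w, hr' w, mul_one_div]
  · exact iteratedDeriv_EulerOpXT_SfFam ⟨c, hc⟩ ⟨p, hp⟩ ⟨s, hs⟩ ⟨r, hr⟩ ⟨q, hq⟩ ⟨e, he⟩ ⟨f, hf⟩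
      ⟨f₁, hf₁⟩ ⟨f₂, hf₂⟩ ⟨φ, hφ⟩ hc0 hr1
      (Filter.eventually_of_mem (isOpen_Ioo.mem_nhds hx) hfφ) (hf₁' _) hj
end
end

section
/- Let a be a smooth function with a' nowhere vanishing, and let κ₁, κ₂ be real constants. Choose h with h'' = a, c = κ₁/a', p = κ₂/(2a') − (3κ₁²/10)·a''/(a')³, and s = κ₁²·( (2/5)·(a'')³/(a')⁵ − (7/20)·a''·a'''/(a')⁴ + (1/24)·a''''/(a')³ ) − (κ₂/12)·( (a'')²/(a')³ − a'''/(a')² ). Then, identically as differential polynomials in u, u_x, …, u_xxxxx, the Hamiltonian perturbation ∂_x E(D_{(c,p,s)}(h)) equals a(u)·u_x + ε²·κ₁·u_xxx + ε⁴·κ₂·u_xxxxx; that is, with these choices the generalized KdV equation u_t = a(u)u_x + ε²κ₁u_xxx + ε⁴κ₂u_xxxxx belongs to the class of Hamiltonian perturbations. -/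
open Set

noncomputable section

theorem totalDer_const (r : ℝ) : totalDer (fun _ => r) = fun _ => 0 := by
  funext v
  simp [totalDer, pderivJet]

theorem totalDer_iterate_zero (k : ℕ) : totalDer^[k] (fun _ => 0) = fun _ => 0 :=
  Function.iterate_fixed (totalDer_const 0) k

theorem totalDer_const_mul_coord (r : ℝ) (n : ℕ) :
    totalDer (fun v => r * v n) = fun v => r * v (n + 1) := by
  funext v
  rw [totalDer, tsum_eq_single n]
  · simp [pderivJet, mul_comm]
  · intro k hk
    simp [pderivJet, Function.update_of_ne hk.symm]

/-- The Euler-Lagrange derivative of a density which is diagonal and quadratic in `u_x`, `u_xx`. -/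
theorem EulerOp_diagonal_quadratic {h : ℝ → ℝ} (α β : ℝ) :
    EulerOp (fun v => h (v 0) + α / 2 * v 1 ^ 2 + β / 2 * v 2 ^ 2) =
      fun v => deriv h (v 0) - α * v 2 + β * v 4 := by
  set P : (ℕ → ℝ) → ℝ := fun v => h (v 0) + α / 2 * v 1 ^ 2 + β / 2 * v 2 ^ 2 with hP
  have h0 : pderivJet P 0 = fun v => deriv h (v 0) := by
    funext v
    simp [pderivJet, hP]
  have h1 : pderivJet P 1 = fun v => α * v 1 := by
    funext v
    simp [pderivJet, hP]
    ring
  have h2 : pderivJet P 2 = fun v => β * v 2 := by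
    funext v
    simp [pderivJet, hP]
    ring
  have h3 : ∀ k, 3 ≤ k → pderivJet P k = fun _ => 0 := by
    intro k hk
    funext v
    simp [pderivJet, hP, show (0 : ℕ) ≠ k by omega,
      show (1 : ℕ) ≠ k by omega, show (2 : ℕ) ≠ k by omega]
  funext v
  rw [EulerOp, tsum_eq_sum (s := Finset.range 3)]
  · simp [Finset.sum_range_succ, h0, h1, h2, totalDer_const_mul_coord]
    ring
  · intro k hk
    rw [h3 k (by simpa using hk), totalDer_iterate_zero, mul_zero]

theorem totalDer_comp_add_linear {g : ℝ → ℝ} (α β : ℝ) :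
    totalDer (fun v => g (v 0) - α * v 2 + β * v 4) =
      fun v => deriv g (v 0) * v 1 - α * v 3 + β * v 5 := by
  funext v
  rw [totalDer, tsum_eq_sum (s := Finset.range 5)]
  · simp [Finset.sum_range_succ, pderivJet]
    ring
  · intro k hk
    have hk : 5 ≤ k := by simpa using hk
    simp [pderivJet, show (0 : ℕ) ≠ k by omega,
      show (2 : ℕ) ≠ k by omega, show (4 : ℕ) ≠ k by omega]

/-- the generalized KdV equation
`u_t = a(u)u_x + ε²κ₁u_xxx + ε⁴κ₂u_xxxxx` belongs to the class of Hamiltonian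
perturbations, for the indicated choice of `h, c, p, s`. -/
theorem generalized_kdv_is_hamiltonian_perturbation
    (a h c p s : ℝ → ℝ) (κ₁ κ₂ : ℝ)
    (ha : ContDiff ℝ (⊤ : ℕ∞) a) (hh : ContDiff ℝ (⊤ : ℕ∞) h)
    (ha' : ∀ w, deriv a w ≠ 0)
    (hh2 : ∀ w, iteratedDeriv 2 h w = a w)
    (hcdef : ∀ w, c w = κ₁ / deriv a w)
    (hpdef : ∀ w, p w = κ₂ / (2 * deriv a w)
      - (3 * κ₁^2 / 10) * iteratedDeriv 2 a w / (deriv a w)^3)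
    (hsdef : ∀ w, s w = κ₁^2 * ((2/5) * (iteratedDeriv 2 a w)^3 / (deriv a w)^5
        - (7/20) * iteratedDeriv 2 a w * iteratedDeriv 3 a w / (deriv a w)^4
        + (1/24) * iteratedDeriv 4 a w / (deriv a w)^3)
      - (κ₂/12) * ((iteratedDeriv 2 a w)^2 / (deriv a w)^3
        - iteratedDeriv 3 a w / (deriv a w)^2)) :
    ∀ (ε : ℝ) (v : ℕ → ℝ),
      totalDer (EulerOp (Dop c p s h ε)) v
        = a (v 0) * v 1 + ε^2 * κ₁ * v 3 + ε^4 * κ₂ * v 5 := by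
  intro ε v
  have deriv_iter (n : ℕ) (w : ℝ) :
      HasDerivAt (iteratedDeriv n a) (iteratedDeriv (n + 1) a w) w := by
    rw [iteratedDeriv_succ]
    exact ((ha.differentiable_iteratedDeriv n (by exact_mod_cast WithTop.coe_lt_top n)) w).hasDerivAt
  have d1 (w : ℝ) : HasDerivAt (deriv a) (iteratedDeriv 2 a w) w := by
    simpa only [iteratedDeriv_one] using deriv_iter 1 w
  have hh2' : iteratedDeriv 2 h = a := funext hh2
  have iter_h (n : ℕ) : iteratedDeriv (n + 2) h = iteratedDeriv n a := by
    rw [← hh2', iteratedDeriv_eq_iterate, iteratedDeriv_eq_iterate, iteratedDeriv_eq_iterate,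
      Function.iterate_add_apply]
  have h3 : iteratedDeriv 3 h = deriv a := by rw [iter_h 1, iteratedDeriv_one]
  have hc1 (w : ℝ) : HasDerivAt c (-κ₁ * iteratedDeriv 2 a w / deriv a w ^ 2) w := by
    rw [funext hcdef]
    refine ((hasDerivAt_const w κ₁).fun_div (d1 w) (ha' w)).congr_deriv ?_
    ring
  have hc2 (w : ℝ) : iteratedDeriv 2 c w =
      κ₁ * (2 * iteratedDeriv 2 a w ^ 2 / deriv a w ^ 3 - iteratedDeriv 3 a w / deriv a w ^ 2) := by
    rw [iteratedDeriv_succ, iteratedDeriv_one, funext fun w => (hc1 w).deriv]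
    refine (((deriv_iter 2 w).const_mul (-κ₁)).fun_div ((d1 w).fun_pow 2)
      (pow_ne_zero 2 (ha' w))).deriv.trans ?_
    have := ha' w
    field_simp
    ring
  have hp1 (w : ℝ) : deriv p w = -κ₂ * iteratedDeriv 2 a w / (2 * deriv a w ^ 2)
      - 3 * κ₁ ^ 2 / 10 * (iteratedDeriv 3 a w / deriv a w ^ 3
        - 3 * iteratedDeriv 2 a w ^ 2 / deriv a w ^ 4) := by
    rw [funext hpdef]
    have := ha' w
    refine (((hasDerivAt_const w κ₂).fun_div ((d1 w).const_mul 2) (by simpa using this)).fun_sub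
      (((deriv_iter 2 w).const_mul (3 * κ₁ ^ 2 / 10)).fun_div ((d1 w).fun_pow 3)
        (pow_ne_zero 3 this))).deriv.trans ?_
    field_simp
    ring
  have hC (w : ℝ) : cCoef c h w = κ₁ := by
    rw [cCoef, h3, hcdef, div_mul_cancel₀ _ (ha' w)]
  have hP (w : ℝ) : pCoef c p h w = κ₂ / 2 := by
    have := ha' w
    rw [pCoef, h3, iter_h 2, hcdef, hpdef]
    field_simp
    ring
  have hS (w : ℝ) : sCoef c p s h w = 0 := by
    have := ha' w
    rw [sCoef, h3, iter_h 2, iter_h 3, iter_h 4, hc2, (hc1 w).deriv, hp1, hcdef, hpdef, hsdef]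
    field_simp
    ring
  have hD : Dop c p s h ε =
      fun v => h (v 0) + -(ε ^ 2 * κ₁) / 2 * v 1 ^ 2 + ε ^ 4 * κ₂ / 2 * v 2 ^ 2 := by
    funext v
    rw [Dop, hC, hP, hS]
    ring
  rw [hD, EulerOp_diagonal_quadratic, totalDer_comp_add_linear]
  have hdd : deriv (deriv h) (v 0) = a (v 0) := by
    rw [← hh2, iteratedDeriv_succ, iteratedDeriv_one]
  simp only [hdd]
  ring
end
end
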